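/- arXiv:1606.09389 — 5 statements merged into one kernel-verified Lean document; each statement's English description precedes it below -/
import Mathlib

section
/- Let G be a finite bipartite graph with maximum degree Δ(G) = 2r for some integer r ≥ 2, such that the degree of every vertex of G lies in the set {1, 2, 2r−2, 2r−1, 2r}. Then G has a cyclic interval 2r-coloring. -/
open SimpleGraph

/-- The set of colors appearing on edges incident to `v` under the edge coloring `c`. -/
def colorsAt {V : Type*} (G : SimpleGraph V) (c : Sym2 V → ℕ) (v : V) : Set ℕ :=
  c '' (G.incidenceSet v)

/-- A set of natural numbers is an interval of consecutive integers. -/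
def IsIntervalSet (S : Set ℕ) : Prop := ∃ a b : ℕ, S = Set.Icc a b

/-- A proper edge coloring of `G` with colors `1, …, t`: every edge gets a color in
`{1, …, t}` and distinct edges sharing a vertex get distinct colors. -/
def IsProperEdgeColoring {V : Type*} (G : SimpleGraph V) (t : ℕ) (c : Sym2 V → ℕ) : Prop :=
  (∀ e ∈ G.edgeSet, c e ∈ Set.Icc 1 t) ∧
  ∀ e₁ ∈ G.edgeSet, ∀ e₂ ∈ G.edgeSet, e₁ ≠ e₂ → (∃ v, v ∈ e₁ ∧ v ∈ e₂) → c e₁ ≠ c e₂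

/-- A cyclic interval `t`-coloring of `G`: a proper edge coloring with colors `1, …, t`
such that at every vertex the set of incident colors, or its complement in `{1, …, t}`,
is an interval of consecutive integers. -/
def IsCyclicIntervalColoring {V : Type*} (G : SimpleGraph V) (t : ℕ) (c : Sym2 V → ℕ) : Prop :=
  IsProperEdgeColoring G t c ∧
  ∀ v : V, IsIntervalSet (colorsAt G c v) ∨ IsIntervalSet (Set.Icc 1 t \ colorsAt G c v)

/-- Two involutions without fixed points admit a common 2-coloring. -/
lemma two_invol_aux {D : Type*} (a b : Equiv.Perm D) (ha : ∀ x, a (a x) = x)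
    (hb : ∀ x, b (b x) = x) (ha' : ∀ x, a x ≠ x) (hb' : ∀ x, b x ≠ x) :
    ∃ f : D → Prop, (∀ x, f (a x) ↔ ¬ f x) ∧ (∀ x, f (b x) ↔ ¬ f x) := by
  classical
  set ρ : Equiv.Perm D := a * b with hρ
  have haa : a * a = 1 := Equiv.ext ha
  have hbb : b * b = 1 := Equiv.ext hb
  have hai : a⁻¹ = a := inv_eq_of_mul_eq_one_left haa
  have hbi : b⁻¹ = b := inv_eq_of_mul_eq_one_left hbb
  have hconj : a * ρ * a⁻¹ = ρ⁻¹ := by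
    rw [hρ, mul_inv_rev, hai, hbi, ← mul_assoc, haa, one_mul]
  have hcomm : ∀ k : ℤ, ∀ x, a ((ρ ^ k) x) = (ρ ^ (-k)) (a x) := by
    intro k x
    have h : a * ρ ^ k * a⁻¹ = ρ ^ (-k) := by
      rw [← conj_zpow, hconj, inv_zpow, zpow_neg]
    rw [← h]
    simp [Equiv.Perm.mul_apply]
  have hne : ∀ x, ¬ ρ.SameCycle x (a x) := by
    rintro x ⟨k, hk⟩
    obtain ⟨m, hm⟩ | ⟨m, hm⟩ := Int.even_or_odd k
    · apply ha' ((ρ ^ m) x)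
      rw [hcomm, ← hk, ← Equiv.Perm.mul_apply, ← zpow_add]
      congr 2; omega
    · apply hb' ((ρ ^ m) x)
      apply a.injective
      have h1 : a (b ((ρ ^ m) x)) = (ρ ^ (1 + m)) x := by
        rw [zpow_add, zpow_one]; rfl
      rw [h1, hcomm, ← hk, ← Equiv.Perm.mul_apply, ← zpow_add]
      congr 2; omega
  have hmap : ∀ x y, ρ.SameCycle x y → ρ.SameCycle (a x) (a y) := by
    rintro x y ⟨k, hk⟩
    exact ⟨-k, by rw [← hcomm, hk]⟩
  let Q := Quotient (Equiv.Perm.SameCycle.setoid ρ)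
  let q : D → Q := fun x => Quotient.mk _ x
  have hq : ∀ x y, q x = q y ↔ ρ.SameCycle x y := fun x y => Quotient.eq
  let L : LinearOrder Q := linearOrderOfSTO WellOrderingRel
  have hba : ∀ x, q (b x) = q (a x) := by
    intro x
    rw [hq]
    exact ⟨1, by simp [hρ, hb]⟩
  have hab : ∀ x, q (a (b x)) = q x := by
    intro x
    rw [hq]
    exact Equiv.Perm.SameCycle.symm ⟨1, by simp [hρ]⟩
  have hqne : ∀ x, q x ≠ q (a x) := fun x h => hne x ((hq _ _).1 h)
  have key : ∀ x, q (a x) < q x ↔ ¬ q x < q (a x) := by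
    intro x
    rw [not_lt]
    exact ⟨le_of_lt, fun h => lt_of_le_of_ne h (hqne x).symm⟩
  refine ⟨fun x => q x < q (a x), fun x => ?_, fun x => ?_⟩
  · simp only [ha]; exact key x
  · simp only [hab, hba]; exact key x

/-- Two involutions admit a common 2-coloring (away from their fixed points). -/
lemma two_invol {D : Type*} (a b : D → D) (ha : ∀ x, a (a x) = x) (hb : ∀ x, b (b x) = x) :
    ∃ f : D → Prop, (∀ x, a x ≠ x → (f (a x) ↔ ¬ f x)) ∧
      (∀ x, b x ≠ x → (f (b x) ↔ ¬ f x)) := by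
  classical
  have ext : ∀ c : D → D, (∀ x, c (c x) = x) → ∃ c' : Equiv.Perm (D × Bool),
      (∀ x, c' (c' x) = x) ∧ (∀ x, c' x ≠ x) ∧ ∀ x i, c x ≠ x → c' (x, i) = (c x, i) := by
    intro c hc
    let g : D × Bool → D × Bool := fun x => if c x.1 = x.1 then (x.1, !x.2) else (c x.1, x.2)
    have hg : ∀ x, g (g x) = x := by
      rintro ⟨x, i⟩
      by_cases h : c x = x
      · simp [g, h]
      · have : ¬ x = c x := fun h' => h h'.symm
        simp [g, h, hc, this]
    refine ⟨⟨g, g, hg, hg⟩, hg, ?_, ?_⟩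
    · rintro ⟨x, i⟩
      by_cases h : c x = x
      · simp [g, h]
      · simp [g, h]
    · intro x i h
      simp [g, h]
  obtain ⟨a', ha1, ha2, ha3⟩ := ext a ha
  obtain ⟨b', hb1, hb2, hb3⟩ := ext b hb
  obtain ⟨f, hfa, hfb⟩ := two_invol_aux a' b' ha1 hb1 ha2 hb2
  refine ⟨fun x => f (x, true), fun x hx => ?_, fun x hx => ?_⟩
  · simp only; rw [← ha3 x true hx]; exact hfa _
  · simp only; rw [← hb3 x true hx]; exact hfb _

/-- A pairing of the elements of a finite set with at most one unpaired element. -/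
lemma exists_pairing {V : Type*} [DecidableEq V] (n : ℕ) : ∀ s : Finset V, s.card = n →
    ∃ t : V → V, (∀ x, t (t x) = x) ∧ (∀ x, x ∉ s → t x = x) ∧
      (s.filter (fun x => t x = x)).card ≤ 1 := by
  induction n using Nat.strong_induction_on with
  | _ n ih =>
    intro s hs
    by_cases h1 : s.card ≤ 1
    · exact ⟨id, fun _ => rfl, fun _ _ => rfl, (Finset.card_filter_le _ _).trans h1⟩
    · obtain ⟨a, ha, b, hb, hab⟩ := Finset.one_lt_card.1 (not_le.1 h1)
      have hlt : ((s.erase a).erase b).card < n := by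
        rw [← hs]
        exact lt_of_le_of_lt (Finset.card_erase_le) (Finset.card_erase_lt_of_mem ha)
      obtain ⟨t, ht1, ht2, ht3⟩ := ih _ hlt _ rfl
      have hta : t a = a := ht2 a (by simp)
      have htb : t b = b := ht2 b (by simp)
      have hba : b ≠ a := hab.symm
      refine ⟨fun x => if x = a then b else if x = b then a else t x, ?_, ?_, ?_⟩
      · intro x
        by_cases hxa : x = a
        · simp [hxa, hba]
        by_cases hxb : x = b
        · simp [hxb, hba]
        have h1 : t x ≠ a := fun h => hxa (by rw [← ht1 x, h, hta])
        have h2 : t x ≠ b := fun h => hxb (by rw [← ht1 x, h, htb])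
        simp [hxa, hxb, h1, h2, ht1]
      · intro x hx
        have hxa : x ≠ a := fun h => hx (h ▸ ha)
        have hxb : x ≠ b := fun h => hx (h ▸ hb)
        simp only [hxa, hxb, if_false]
        exact ht2 x (by simp [hx])
      · refine le_trans (Finset.card_le_card ?_) ht3
        intro x hx
        simp only [Finset.mem_filter] at hx ⊢
        obtain ⟨hxs, hx⟩ := hx
        by_cases hxa : x = a
        · simp [hxa, hba] at hx
        by_cases hxb : x = b
        · simp [hxb, hba, hab] at hx
        simp only [hxa, hxb, if_false] at hx
        exact ⟨by simp [hxa, hxb, hxs], hx⟩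

/-- Balanced orientation of a finite graph. -/
lemma exists_orientation {V : Type*} [Fintype V] [DecidableEq V] (G : SimpleGraph V)
    [DecidableRel G.Adj] :
    ∃ f : V → V → Bool, (∀ v w, G.Adj v w → f w v = !f v w) ∧
      (∀ v, ((G.neighborFinset v).filter (fun w => f v w = true)).card ≤ (G.degree v + 1) / 2) ∧
      (∀ v, ((G.neighborFinset v).filter (fun w => f v w = false)).card ≤
        (G.degree v + 1) / 2) := by
  classical
  choose t ht1 ht2 ht3 using fun v => exists_pairing _ (G.neighborFinset v) rfl
  obtain ⟨f, hf1, hf2⟩ := two_invol (D := V × V) (fun p => (p.2, p.1)) (fun p => (p.1, t p.1 p.2))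
    (fun _ => rfl) (fun p => by simp [ht1])
  have hts : ∀ v w, w ∈ G.neighborFinset v → t v w ∈ G.neighborFinset v := by
    intro v w hw
    by_contra h
    have := ht2 v _ h
    rw [ht1] at this
    rw [← this] at h
    exact h hw
  have hswap : ∀ v w, t v w ≠ w → (f (v, t v w) ↔ ¬ f (v, w)) := fun v w h =>
    hf2 (v, w) (by simpa using h)
  have hdeg : ∀ v, ((G.neighborFinset v).filter (fun w => f (v, w))).card +
      ((G.neighborFinset v).filter (fun w => ¬ f (v, w))).card = G.degree v := by
    intro v
    rw [Finset.card_filter_add_card_filter_not]; simp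
  have hgen : ∀ v, ∀ (P Q : V → Prop) [DecidablePred P] [DecidablePred Q],
      (∀ w, P w → t v w ≠ w → Q (t v w)) →
      ((G.neighborFinset v).filter (fun w => P w)).card ≤
      ((G.neighborFinset v).filter (fun w => Q w)).card + 1 := by
    intro v P Q _ _ hP
    have h1 : ((G.neighborFinset v).filter (fun w => P w)) ⊆
        ((G.neighborFinset v).filter (fun w => Q w)).image (t v) ∪
        ((G.neighborFinset v).filter (fun w => t v w = w)) := by
      intro w hw
      simp only [Finset.mem_filter, Finset.mem_union, Finset.mem_image] at hw ⊢
      by_cases h : t v w = w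
      · exact Or.inr ⟨hw.1, h⟩
      · exact Or.inl ⟨t v w, ⟨hts v w hw.1, hP w hw.2 h⟩, ht1 v w⟩
    refine (Finset.card_le_card h1).trans ((Finset.card_union_le _ _).trans ?_)
    exact add_le_add Finset.card_image_le (ht3 v)
  refine ⟨fun v w => decide (f (v, w)), ?_, ?_, ?_⟩
  · intro v w h
    have := hf1 (v, w) (by intro h'; simp at h'; exact h.ne h'.2)
    simp only at this
    by_cases h2 : f (v, w) <;> simp [this, h2]
  · intro v
    have h1 := hgen v (fun w => f (v, w)) (fun w => ¬ f (v, w))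
      (fun w hw h h' => (hswap v w h).1 h' hw)
    have h2 := hdeg v
    simp only [decide_eq_true_eq]
    omega
  · intro v
    have h1 := hgen v (fun w => ¬ f (v, w)) (fun w => f (v, w))
      (fun w hw h => (hswap v w h).2 hw)
    have h2 := hdeg v
    simp only [decide_eq_false_iff_not]
    omega

/-- Integer Birkhoff theorem. -/
lemma nat_birkhoff {W : Type*} [Fintype W] [DecidableEq W] (r : ℕ) : ∀ A : W → W → ℕ,
    (∀ v, ∑ w, A v w = r) → (∀ w, ∑ v, A v w = r) →
    ∃ σ : ℕ → Equiv.Perm W, ∀ v w,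
      ((Finset.range r).filter (fun i => σ i v = w)).card = A v w := by
  induction r with
  | zero =>
    intro A h1 h2
    refine ⟨fun _ => 1, fun v w => ?_⟩
    have := (Finset.sum_eq_zero_iff.1 (h1 v)) w (Finset.mem_univ _)
    rw [this, Finset.range_zero, Finset.filter_empty, Finset.card_empty]
  | succ r ih =>
    intro A h1 h2
    have hall : ∀ s : Finset W, s.card ≤
        (s.biUnion (fun v => Finset.univ.filter (fun w => A v w ≠ 0))).card := by
      intro s
      set T := s.biUnion (fun v => Finset.univ.filter (fun w => A v w ≠ 0)) with hT
      have e1 : ∑ v ∈ s, ∑ w, A v w = s.card * (r + 1) := by simp [h1]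
      have e2 : ∑ w ∈ T, ∑ v, A v w = T.card * (r + 1) := by simp [h2]
      have e3 : ∑ v ∈ s, ∑ w, A v w ≤ ∑ w ∈ T, ∑ v, A v w := by
        rw [Finset.sum_comm (s := T)]
        have : ∑ v ∈ s, ∑ w, A v w = ∑ v ∈ s, ∑ w ∈ T, A v w := by
          refine Finset.sum_congr rfl fun v hv => ?_
          symm
          refine Finset.sum_subset (Finset.subset_univ _) fun w _ hw => ?_
          by_contra h
          exact hw (Finset.mem_biUnion.2 ⟨v, hv, by simp [h]⟩)
        rw [this]
        exact Finset.sum_le_sum_of_subset (Finset.subset_univ _)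
      rw [e1, e2] at e3
      exact Nat.le_of_mul_le_mul_right e3 (Nat.succ_pos r)
    obtain ⟨g, hg, hg'⟩ := (Finset.all_card_le_biUnion_card_iff_exists_injective _).1 hall
    rw [Finite.injective_iff_bijective] at hg
    let τ : Equiv.Perm W := Equiv.ofBijective g hg
    have hτ : ∀ v, 1 ≤ A v (τ v) := by
      intro v
      have := hg' v
      simp only [Finset.mem_filter] at this
      exact Nat.one_le_iff_ne_zero.2 this.2
    have hle : ∀ v w, (if τ v = w then 1 else 0) ≤ A v w := by
      intro v w
      split_ifs with h
      · rw [← h]; exact hτ v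
      · exact Nat.zero_le _
    obtain ⟨σ, hσ⟩ := ih (fun v w => A v w - if τ v = w then 1 else 0)
      (by
        intro v
        have : ∑ w, (A v w - if τ v = w then 1 else 0) + ∑ w, (if τ v = w then 1 else 0)
            = ∑ w, A v w := by
          rw [← Finset.sum_add_distrib]
          exact Finset.sum_congr rfl fun w _ => Nat.sub_add_cancel (hle v w)
        rw [h1] at this
        simpa using this)
      (by
        intro w
        have : ∑ v, (A v w - if τ v = w then 1 else 0) + ∑ v, (if τ v = w then 1 else 0)
            = ∑ v, A v w := by
          rw [← Finset.sum_add_distrib]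
          exact Finset.sum_congr rfl fun v _ => Nat.sub_add_cancel (hle v w)
        rw [h2] at this
        simpa [← Equiv.eq_symm_apply] using this)
    refine ⟨fun i => if i = r then τ else σ i, fun v w => ?_⟩
    rw [Finset.range_add_one, Finset.filter_insert]
    have hc : ((Finset.range r).filter
        (fun i => (if i = r then τ else σ i : Equiv.Perm W) v = w)) =
        (Finset.range r).filter (fun i => σ i v = w) := by
      refine Finset.filter_congr fun i hi => ?_
      have : i ≠ r := (Finset.mem_range.1 hi).ne
      simp [this]
    have h3 := hσ v w
    have h4 := hle v w
    simp only [if_true]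
    split_ifs with h
    · rw [Finset.card_insert_of_notMem (by simp), hc, h3]
      simp only [h, if_true] at h4 ⊢
      omega
    · rw [hc, h3]
      simp [h]

/-- The local analysis at one vertex. -/
lemma local_interval (r d : ℕ) (hr : 2 ≤ r)
    (hd : d ∈ ({1, 2, 2 * r - 2, 2 * r - 1, 2 * r} : Set ℕ))
    (C F : Finset ℕ) (hC : C.card = d) (hCr : C ⊆ Finset.Icc 1 (2 * r))
    (hF : F ⊆ Finset.range r) (hFc : r - (d + 1) / 2 ≤ F.card)
    (hCF : ∀ k ∈ C, (k - 1) / 2 ∉ F) :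
    IsIntervalSet (C : Set ℕ) ∨ IsIntervalSet (Set.Icc 1 (2 * r) \ (C : Set ℕ)) := by
  have hcompl : (Set.Icc 1 (2 * r) \ (C : Set ℕ)) = ((Finset.Icc 1 (2 * r) \ C : Finset ℕ) : Set ℕ) := by
    simp
  have hcard : (Finset.Icc 1 (2 * r) \ C).card = 2 * r - d := by
    rw [Finset.card_sdiff_of_subset hCr, hC]; simp
  rw [hcompl]
  have small1 : ∀ S : Finset ℕ, S.card = 1 → IsIntervalSet (S : Set ℕ) := by
    intro S hS
    obtain ⟨a, rfl⟩ := Finset.card_eq_one.1 hS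
    exact ⟨a, a, by simp⟩
  have small2 : ∀ S : Finset ℕ, ∀ i, S.card = 2 → (2 * i + 1 ∈ S ∧ 2 * i + 2 ∈ S) →
      IsIntervalSet (S : Set ℕ) := by
    intro S i hS h
    refine ⟨2 * i + 1, 2 * i + 2, ?_⟩
    have : Finset.Icc (2 * i + 1) (2 * i + 2) = S := by
      apply Finset.eq_of_subset_of_card_le
      · intro x hx
        rw [Finset.mem_Icc] at hx
        obtain rfl | rfl : x = 2 * i + 1 ∨ x = 2 * i + 2 := by omega
        · exact h.1
        · exact h.2
      · simp [hS]
    rw [← this]; simp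
  rcases hd with rfl | rfl | rfl | rfl | hd
  · exact Or.inl (small1 C hC)
  · left
    obtain ⟨a, b, hab, rfl⟩ := Finset.card_eq_two.1 hC
    have hr1 : (Finset.range r \ F).card ≤ 1 := by
      rw [Finset.card_sdiff_of_subset hF, Finset.card_range]; omega
    have ha := Finset.mem_Icc.1 (hCr (by simp : a ∈ ({a, b} : Finset ℕ)))
    have hb := Finset.mem_Icc.1 (hCr (by simp : b ∈ ({a, b} : Finset ℕ)))
    have e := Finset.card_le_one.1 hr1 ((a - 1) / 2)
      (Finset.mem_sdiff.2 ⟨Finset.mem_range.2 (by omega), hCF a (by simp)⟩) ((b - 1) / 2)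
      (Finset.mem_sdiff.2 ⟨Finset.mem_range.2 (by omega), hCF b (by simp)⟩)
    refine small2 _ ((a - 1) / 2) hC ?_
    simp only [Finset.mem_insert, Finset.mem_singleton]
    omega
  · right
    have : 0 < F.card := by omega
    obtain ⟨j, hj⟩ := Finset.card_pos.1 this
    have hjr := Finset.mem_range.1 (hF hj)
    refine small2 _ j (by omega) ⟨?_, ?_⟩
    · refine Finset.mem_sdiff.2 ⟨Finset.mem_Icc.2 (by omega), fun h => hCF _ h ?_⟩
      have : (2 * j + 1 - 1) / 2 = j := by omega
      rwa [this]
    · refine Finset.mem_sdiff.2 ⟨Finset.mem_Icc.2 (by omega), fun h => hCF _ h ?_⟩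
      have : (2 * j + 2 - 1) / 2 = j := by omega
      rwa [this]
  · exact Or.inr (small1 _ (by omega))
  · right
    have hd' : d = 2 * r := hd
    have : Finset.Icc 1 (2 * r) \ C = ∅ := Finset.card_eq_zero.1 (by omega)
    rw [this]
    exact ⟨1, 0, by simp⟩

/-- Permutations (of a doubled vertex set) realizing a balanced orientation. -/
lemma exists_perms {V : Type*} [Fintype V] [DecidableEq V] (G : SimpleGraph V)
    [DecidableRel G.Adj] (r : ℕ) (hdeg : ∀ v, G.degree v ≤ 2 * r) :
    ∃ (f : V → V → Bool) (σ : ℕ → Equiv.Perm (V ⊕ V)),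
      (∀ v w, G.Adj v w → f w v = !f v w) ∧
      (∀ v w, G.Adj v w → f v w = true → ∃ i < r, σ i (Sum.inl v) = Sum.inl w) ∧
      (∀ v, r - (G.degree v + 1) / 2 ≤
        ((Finset.range r).filter (fun i => σ i (Sum.inl v) = Sum.inl v)).card) := by
  obtain ⟨f, hf, hout, hin⟩ := exists_orientation G
  let A : V → V → ℕ := fun v w =>
    (if G.Adj v w ∧ f v w = true then 1 else 0) + (if v = w then r - (G.degree v + 1) / 2 else 0)
  have hrow : ∀ v, ∑ w, A v w ≤ r := by
    intro v
    have h1 : ∑ w, (if G.Adj v w ∧ f v w = true then 1 else 0) =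
        ((G.neighborFinset v).filter (fun w => f v w = true)).card := by
      rw [← Finset.card_filter]
      congr 1; ext w; simp
    have := hout v
    have := hdeg v
    simp only [A, Finset.sum_add_distrib, h1]
    simp
    omega
  have hcol : ∀ w, ∑ v, A v w ≤ r := by
    intro w
    have h1 : ∑ v, (if G.Adj v w ∧ f v w = true then 1 else 0) =
        ((G.neighborFinset w).filter (fun v => f w v = false)).card := by
      rw [← Finset.card_filter]
      congr 1; ext v
      simp only [Finset.mem_filter, Finset.mem_univ, true_and, mem_neighborFinset, G.adj_comm w v]
      refine and_congr_right fun h => ?_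
      rw [hf v w h]; simp
    have := hin w
    have := hdeg w
    simp only [A, Finset.sum_add_distrib, h1]
    simp
    omega
  let B : V ⊕ V → V ⊕ V → ℕ := fun x y => match x, y with
    | Sum.inl v, Sum.inl w => A v w
    | Sum.inl v, Sum.inr w => if v = w then r - ∑ u, A v u else 0
    | Sum.inr v, Sum.inl w => if v = w then r - ∑ u, A u w else 0
    | Sum.inr v, Sum.inr w => A w v
  obtain ⟨σ, hσ⟩ := nat_birkhoff r B
    (by
      rintro (v | v)
      · have := hrow v
        simp only [Fintype.sum_sum_type, B]
        simp
        omega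
      · have := hcol v
        simp only [Fintype.sum_sum_type, B]
        simp
        omega)
    (by
      rintro (v | v)
      · have := hcol v
        simp only [Fintype.sum_sum_type, B]
        simp
        omega
      · have := hrow v
        simp only [Fintype.sum_sum_type, B]
        simp
        omega)
  refine ⟨f, σ, hf, ?_, ?_⟩
  · intro v w h hfv
    have h1 : 0 < ((Finset.range r).filter (fun i => σ i (Sum.inl v) = Sum.inl w)).card := by
      rw [hσ]
      simp [B, A, h, hfv]
    obtain ⟨i, hi⟩ := Finset.card_pos.1 h1
    simp only [Finset.mem_filter, Finset.mem_range] at hi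
    exact ⟨i, hi⟩
  · intro v
    rw [hσ]
    simp [B, A]

/-- a finite bipartite graph with maximum degree `2r` (`r ≥ 2`) in which every
vertex degree lies in `{1, 2, 2r-2, 2r-1, 2r}` has a cyclic interval `2r`-coloring. -/
theorem stmt_0 {V : Type*} [Fintype V] (G : SimpleGraph V) [DecidableRel G.Adj]
    (hbip : G.Colorable 2) (r : ℕ) (hr : 2 ≤ r) (hΔ : G.maxDegree = 2 * r)
    (hdeg : ∀ v : V, G.degree v ∈ ({1, 2, 2 * r - 2, 2 * r - 1, 2 * r} : Set ℕ)) :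
    ∃ c : Sym2 V → ℕ, IsCyclicIntervalColoring G (2 * r) c := by
  classical
  have hdle : ∀ v, G.degree v ≤ 2 * r := fun v => hΔ ▸ G.degree_le_maxDegree v
  obtain ⟨col⟩ := hbip
  obtain ⟨f, σ, hf, hσ, hfix⟩ := exists_perms G r hdle
  have hcol : ∀ v w, G.Adj v w → (col v : ℕ) + (col w : ℕ) = 1 := by
    intro v w h
    have h1 := col.valid h
    have h2 : (col v : ℕ) ≠ (col w : ℕ) := fun h' => h1 (Fin.ext h')
    have := (col v).isLt
    have := (col w).isLt
    omega
  have hidx : ∀ v w, ∃ i, G.Adj v w → f v w = true → i < r ∧ σ i (Sum.inl v) = Sum.inl w := by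
    intro v w
    by_cases h : G.Adj v w ∧ f v w = true
    · obtain ⟨i, hi⟩ := hσ v w h.1 h.2
      exact ⟨i, fun _ _ => hi⟩
    · exact ⟨0, fun h1 h2 => (h ⟨h1, h2⟩).elim⟩
  choose idx hidx using hidx
  let K : V → V → ℕ := fun v w =>
    if f v w = true then 2 * idx v w + 1 + (col v : ℕ) else 2 * idx w v + 1 + (col w : ℕ)
  have hKsymm : ∀ v w, G.Adj v w → K v w = K w v := by
    intro v w h
    have := hf v w h
    by_cases h' : f v w = true
    · simp [K, this, h']
    · simp [K, this, h']
  have hK : ∀ v w, G.Adj v w → ∃ i < r,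
      (K v w = 2 * i + 1 + (col v : ℕ) ∧ σ i (Sum.inl v) = Sum.inl w) ∨
      (K v w + (col v : ℕ) = 2 * i + 2 ∧ σ i (Sum.inl w) = Sum.inl v) := by
    intro v w h
    by_cases h' : f v w = true
    · obtain ⟨h1, h2⟩ := hidx v w h h'
      exact ⟨idx v w, h1, Or.inl ⟨by simp [K, h'], h2⟩⟩
    · have h3 : f w v = true := by rw [hf v w h]; simpa using h'
      obtain ⟨h1, h2⟩ := hidx w v h.symm h3
      refine ⟨idx w v, h1, Or.inr ⟨?_, h2⟩⟩
      have := hcol v w h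
      simp only [K, h', if_false, Bool.false_eq_true]
      omega
  have hKr : ∀ v w, G.Adj v w → K v w ∈ Set.Icc 1 (2 * r) := by
    intro v w h
    obtain ⟨i, hi, h1⟩ := hK v w h
    have := (col v).isLt
    constructor <;> omega
  have hKinj : ∀ v w w', G.Adj v w → G.Adj v w' → K v w = K v w' → w = w' := by
    intro v w w' h h' he
    obtain ⟨i, hi, h1⟩ := hK v w h
    obtain ⟨j, hj, h2⟩ := hK v w' h'
    have hc := (col v).isLt
    have hij : i = j := by omega
    subst hij
    rcases h1 with ⟨h1, h1'⟩ | ⟨h1, h1'⟩ <;> rcases h2 with ⟨h2, h2'⟩ | ⟨h2, h2'⟩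
    · exact Sum.inl_injective (h1'.symm.trans h2')
    · omega
    · omega
    · exact Sum.inl_injective ((σ i).injective (h1'.trans h2'.symm))
  have hKfix : ∀ v w, G.Adj v w →
      σ ((K v w - 1) / 2) (Sum.inl v) ≠ Sum.inl v := by
    intro v w h hs
    obtain ⟨i, hi, h1⟩ := hK v w h
    have hc := (col v).isLt
    have hi' : (K v w - 1) / 2 = i := by omega
    rw [hi'] at hs
    rcases h1 with ⟨h1, h1'⟩ | ⟨h1, h1'⟩
    · exact h.ne (Sum.inl_injective (hs.symm.trans h1'))
    · exact h.ne (Sum.inl_injective ((σ i).injective (hs.trans h1'.symm)))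
  let c : Sym2 V → ℕ := Sym2.lift ⟨fun v w => max (K v w) (K w v), fun v w => max_comm _ _⟩
  have hc : ∀ v w, G.Adj v w → c s(v, w) = K v w := by
    intro v w h
    simp [c, hKsymm v w h]
  refine ⟨c, ⟨?_, ?_⟩, ?_⟩
  · intro e
    induction e using Sym2.ind with
    | _ v w =>
      intro h
      rw [mem_edgeSet] at h
      rw [hc v w h]
      exact hKr v w h
  · rintro e₁ h₁ e₂ h₂ hne ⟨v, hv1, hv2⟩ he
    obtain ⟨w, rfl⟩ := Sym2.mem_iff_exists.1 hv1
    obtain ⟨w', rfl⟩ := Sym2.mem_iff_exists.1 hv2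
    rw [mem_edgeSet] at h₁ h₂
    rw [hc v w h₁, hc v w' h₂] at he
    exact hne (by rw [hKinj v w w' h₁ h₂ he])
  · intro v
    have hset : colorsAt G c v = (((G.neighborFinset v).image (K v) : Finset ℕ) : Set ℕ) := by
      ext k
      simp only [colorsAt, Set.mem_image, Finset.coe_image, Finset.mem_coe, mem_neighborFinset]
      constructor
      · rintro ⟨e, ⟨he, hve⟩, rfl⟩
        obtain ⟨w, rfl⟩ := Sym2.mem_iff_exists.1 hve
        rw [mem_edgeSet] at he
        exact ⟨w, he, (hc v w he).symm⟩
      · rintro ⟨w, hw, rfl⟩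
        exact ⟨s(v, w), ⟨hw, Sym2.mem_mk_left v w⟩, hc v w hw⟩
    rw [hset]
    refine local_interval r (G.degree v) hr (hdeg v) _
      ((Finset.range r).filter (fun i => σ i (Sum.inl v) = Sum.inl v)) ?_ ?_
      (Finset.filter_subset _ _) (hfix v) ?_
    · rw [Finset.card_image_of_injOn, card_neighborFinset_eq_degree]
      intro w hw w' hw' he
      simp only [Finset.mem_coe, mem_neighborFinset] at hw hw'
      exact hKinj v w w' hw hw' he
    · intro k hk
      obtain ⟨w, hw, rfl⟩ := Finset.mem_image.1 hk
      rw [mem_neighborFinset] at hw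
      exact Finset.mem_Icc.2 (hKr v w hw)
    · intro k hk hk'
      obtain ⟨w, hw, rfl⟩ := Finset.mem_image.1 hk
      rw [mem_neighborFinset] at hw
      exact hKfix v w hw (Finset.mem_filter.1 hk').2
end

section
/- Let H be a finite graph with maximum degree Δ(H) = 2r for some integer r ≥ 2, such that every vertex v of H satisfies either deg(v) ≥ 2r−2 or deg(v) ≤ 2. Then the full subdivision of H admits a cyclic interval 2r-coloring. -/
open SimpleGraph

/-- The full subdivision of `H`: the bipartite graph on `V(H) ⊕ E(H)` where
`v : V(H)` is adjacent to `e : E(H)` iff `v` is an endpoint of `e`. -/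
def fullSubdivision {V : Type*} (H : SimpleGraph V) : SimpleGraph (V ⊕ H.edgeSet) :=
  SimpleGraph.fromRel (fun x y =>
    ∃ (v : V) (e : H.edgeSet), v ∈ (e : Sym2 V) ∧ x = Sum.inl v ∧ y = Sum.inr e)

/-- A `2r`-regular multigraph (edges `E`, endpoints `a e`, `b e`) has a balanced orientation. -/
lemma balanced_orientation {V E : Type*} [Fintype V] [DecidableEq V] [Fintype E]
    (a b : E → V) (r : ℕ)
    (h : ∀ v, (∑ e, if a e = v then 1 else 0) + (∑ e, if b e = v then 1 else 0) = 2 * r) :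
    ∃ s t : E → V, (∀ e, (s e = a e ∧ t e = b e) ∨ (s e = b e ∧ t e = a e)) ∧
      (∀ v, (∑ e, if s e = v then 1 else 0) = r) ∧
      (∀ v, (∑ e, if t e = v then 1 else 0) = r) := by
  classical
  have tot : ∀ f : E → V, ∑ v, (∑ e, if f e = v then 1 else 0) = Fintype.card E := by
    intro f
    rw [Finset.sum_comm]
    simp
  have hE : Fintype.card E = Fintype.card V * r := by
    have h1 : ∑ v, ((∑ e, if a e = v then 1 else 0) + (∑ e, if b e = v then 1 else 0))
        = ∑ v : V, 2 * r := Finset.sum_congr rfl (fun v _ => h v)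
    rw [Finset.sum_add_distrib, tot, tot] at h1
    simp at h1
    nlinarith
  obtain ⟨f, hf, hfm⟩ := (Finset.all_card_le_biUnion_card_iff_exists_injective
    (fun e => ({a e, b e} : Finset V) ×ˢ (Finset.univ : Finset (Fin r)))).1 (by
      intro A
      set U := A.image a ∪ A.image b with hU
      have hsub : U ×ˢ (Finset.univ : Finset (Fin r)) ⊆
          A.biUnion (fun e => ({a e, b e} : Finset V) ×ˢ (Finset.univ : Finset (Fin r))) := by
        rintro ⟨v, i⟩ hv
        simp only [hU, Finset.mem_product, Finset.mem_union, Finset.mem_image, Finset.mem_univ,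
          and_true] at hv
        simp only [Finset.mem_biUnion, Finset.mem_product, Finset.mem_insert,
          Finset.mem_singleton, Finset.mem_univ, and_true]
        rcases hv with ⟨e, he, rfl⟩ | ⟨e, he, rfl⟩
        · exact ⟨e, he, Or.inl rfl⟩
        · exact ⟨e, he, Or.inr rfl⟩
      refine le_trans ?_ (Finset.card_le_card hsub)
      rw [Finset.card_product, Finset.card_univ, Fintype.card_fin]
      have key : ∀ g : E → V, (∀ e ∈ A, g e ∈ U) →
          A.card ≤ ∑ v ∈ U, (∑ e, if g e = v then 1 else 0) := by
        intro g hg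
        rw [Finset.sum_comm]
        calc A.card = ∑ e ∈ A, 1 := by simp
          _ ≤ ∑ e ∈ A, ∑ v ∈ U, (if g e = v then 1 else 0) := by
              apply Finset.sum_le_sum
              intro e he
              simp [hg e he]
          _ ≤ _ := Finset.sum_le_sum_of_subset (Finset.subset_univ _)
      have ka := key a (fun e he => Finset.mem_union_left _ (Finset.mem_image_of_mem _ he))
      have kb := key b (fun e he => Finset.mem_union_right _ (Finset.mem_image_of_mem _ he))
      have h1 : ∑ v ∈ U, ((∑ e, if a e = v then 1 else 0) + (∑ e, if b e = v then 1 else 0))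
        = ∑ v ∈ U, 2 * r := Finset.sum_congr rfl (fun v _ => h v)
      rw [Finset.sum_add_distrib] at h1
      simp only [Finset.sum_const, smul_eq_mul] at h1
      nlinarith)
  have hbij : Function.Bijective f := by
    rw [Fintype.bijective_iff_injective_and_card]
    exact ⟨hf, by simp [hE]⟩
  have hs : ∀ v, (∑ e, if (f e).1 = v then 1 else 0) = r := by
    intro v
    rw [hbij.sum_comp (fun x : V × Fin r => if x.1 = v then 1 else 0), Fintype.sum_prod_type,
      Finset.sum_eq_single v]
    · simp
    · intro w _ hw
      simp [hw]
    · simp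
  have hor : ∀ e, (f e).1 = a e ∨ (f e).1 = b e := by
    intro e
    have := hfm e
    simpa using this
  refine ⟨fun e => (f e).1, fun e => if (f e).1 = a e then b e else a e, ?_, hs, ?_⟩
  · intro e
    by_cases h1 : (f e).1 = a e
    · left; simp [h1]
    · right; simp [h1, (hor e).resolve_left h1]
  · intro v
    have h2 : (∑ e, if (f e).1 = v then 1 else 0) +
        (∑ e, if (if (f e).1 = a e then b e else a e) = v then 1 else 0) = 2 * r := by
      rw [← h v, ← Finset.sum_add_distrib, ← Finset.sum_add_distrib]
      apply Finset.sum_congr rfl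
      intro e _
      by_cases h1 : (f e).1 = a e
      · simp [h1]
      · rw [if_neg h1, (hor e).resolve_left h1, add_comm]
    have := hs v
    simp only
    omega

/-- König's edge colouring theorem for regular bipartite multigraphs. -/
lemma konig_regular {V E : Type*} [Fintype V] [DecidableEq V] [DecidableEq E]
    (s t : E → V) (r : ℕ) : ∀ (A : Finset E),
    (∀ v, (A.filter (fun e => s e = v)).card = r) →
    (∀ v, (A.filter (fun e => t e = v)).card = r) →
    ∃ c : E → ℕ, (∀ e ∈ A, c e < r) ∧
      (∀ e ∈ A, ∀ e' ∈ A, s e = s e' → c e = c e' → e = e') ∧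
      (∀ e ∈ A, ∀ e' ∈ A, t e = t e' → c e = c e' → e = e') := by
  induction r with
  | zero =>
    intro A hs _
    have hA : A = ∅ := by
      by_contra hne
      obtain ⟨e, he⟩ := Finset.nonempty_of_ne_empty hne
      have := hs (s e)
      rw [Finset.card_eq_zero, Finset.filter_eq_empty_iff] at this
      exact this he rfl
    subst hA
    exact ⟨fun _ => 0, by simp, by simp, by simp⟩
  | succ r ih =>
    intro A hs ht
    obtain ⟨f, hf, hfm⟩ := (Finset.all_card_le_biUnion_card_iff_exists_injective
      (fun v => (A.filter (fun e => s e = v)).image t)).1 (by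
        intro W
        set U := W.biUnion (fun v => (A.filter (fun e => s e = v)).image t) with hU
        have h1 : (A.filter (fun e => s e ∈ W)).card = W.card * (r + 1) := by
          rw [Finset.card_eq_sum_card_fiberwise (f := s) (t := W)
            (by intro e he; simpa using (Finset.mem_filter.1 he).2)]
          rw [Finset.sum_congr rfl (g := fun _ => r + 1)]
          · simp
          · intro v hv
            rw [← hs v]
            congr 1
            ext e
            simp only [Finset.mem_filter]
            constructor
            · rintro ⟨⟨h1, _⟩, h2⟩; exact ⟨h1, h2⟩
            · rintro ⟨h1, h2⟩; exact ⟨⟨h1, h2 ▸ hv⟩, h2⟩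
        have h2 : (A.filter (fun e => t e ∈ U)).card = U.card * (r + 1) := by
          rw [Finset.card_eq_sum_card_fiberwise (f := t) (t := U)
            (by intro e he; simpa using (Finset.mem_filter.1 he).2)]
          rw [Finset.sum_congr rfl (g := fun _ => r + 1)]
          · simp
          · intro v hv
            rw [← ht v]
            congr 1
            ext e
            simp only [Finset.mem_filter]
            constructor
            · rintro ⟨⟨h1, _⟩, h2⟩; exact ⟨h1, h2⟩
            · rintro ⟨h1, h2⟩; exact ⟨⟨h1, h2 ▸ hv⟩, h2⟩
        have h3 : A.filter (fun e => s e ∈ W) ⊆ A.filter (fun e => t e ∈ U) := by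
          intro e he
          rw [Finset.mem_filter] at he ⊢
          refine ⟨he.1, ?_⟩
          rw [hU, Finset.mem_biUnion]
          exact ⟨s e, he.2, Finset.mem_image.2 ⟨e, by simp [he.1], rfl⟩⟩
        have h4 := Finset.card_le_card h3
        rw [h1, h2] at h4
        exact Nat.le_of_mul_le_mul_right h4 (Nat.succ_pos r))
    have hfm' : ∀ v, ∃ e, e ∈ A ∧ s e = v ∧ t e = f v := by
      intro v
      have := hfm v
      simp only [Finset.mem_image, Finset.mem_filter] at this
      obtain ⟨e, ⟨h1, h2⟩, h3⟩ := this
      exact ⟨e, h1, h2, h3⟩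
    choose m hmA hms hmt using hfm'
    have hfs : Function.Surjective f := Finite.surjective_of_injective hf
    set M := Finset.univ.image m with hM
    have memM : ∀ e, e ∈ M ↔ ∃ v, m v = e := by intro e; simp [hM]
    have hred : ∀ (g : E → V), (∀ v, (A.filter (fun e => g e = v)).card = r + 1) →
        (∀ v, ∃ w, g (m w) = v ∧ ∀ w', g (m w') = v → w' = w) →
        ∀ v, ((A \ M).filter (fun e => g e = v)).card = r := by
      intro g hg hu v
      obtain ⟨w, hw, hw'⟩ := hu v
      have : (A \ M).filter (fun e => g e = v) = (A.filter (fun e => g e = v)).erase (m w) := by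
        ext e
        simp only [Finset.mem_filter, Finset.mem_sdiff, Finset.mem_erase, memM]
        constructor
        · rintro ⟨⟨h1, h2⟩, h3⟩
          exact ⟨fun h => h2 ⟨w, h.symm⟩, h1, h3⟩
        · rintro ⟨h1, h2, h3⟩
          refine ⟨⟨h2, ?_⟩, h3⟩
          rintro ⟨w', rfl⟩
          exact h1 (by rw [hw' w' h3])
      rw [this, Finset.card_erase_of_mem (by simp [hmA, hw]), hg v]
      rfl
    obtain ⟨c, hc1, hc2, hc3⟩ := ih (A \ M)
      (hred s hs (fun v => ⟨v, hms v, fun w' h => by rw [← h, hms]⟩))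
      (hred t ht (fun v => by
        obtain ⟨w, hw⟩ := hfs v
        refine ⟨w, by rw [hmt, hw], fun w' h => hf ?_⟩
        rw [← hmt w', h, hw]))
    have hlt : ∀ e ∈ A, e ∉ M → c e < r := fun e h1 h2 => hc1 e (Finset.mem_sdiff.2 ⟨h1, h2⟩)
    refine ⟨fun e => if e ∈ M then r else c e, ?_, ?_, ?_⟩
    · intro e he
      by_cases h1 : e ∈ M
      · simp [h1]
      · have := hlt e he h1
        simp only [h1, if_false]; omega
    · intro e he e' he' hss hcc
      by_cases h1 : e ∈ M <;> by_cases h2 : e' ∈ M <;> simp only [h1, h2, if_true, if_false] at hcc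
      · obtain ⟨v, rfl⟩ := (memM e).1 h1
        obtain ⟨w, rfl⟩ := (memM e').1 h2
        rw [hms, hms] at hss
        rw [hss]
      · have := hlt e' he' h2; omega
      · have := hlt e he h1; omega
      · exact hc2 e (Finset.mem_sdiff.2 ⟨he, h1⟩) e' (Finset.mem_sdiff.2 ⟨he', h2⟩) hss hcc
    · intro e he e' he' hss hcc
      by_cases h1 : e ∈ M <;> by_cases h2 : e' ∈ M <;> simp only [h1, h2, if_true, if_false] at hcc
      · obtain ⟨v, rfl⟩ := (memM e).1 h1
        obtain ⟨w, rfl⟩ := (memM e').1 h2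
        rw [hmt, hmt] at hss
        rw [hf hss]
      · have := hlt e' he' h2; omega
      · have := hlt e he h1; omega
      · exact hc3 e (Finset.mem_sdiff.2 ⟨he, h1⟩) e' (Finset.mem_sdiff.2 ⟨he', h2⟩) hss hcc

/-- Combination: orientation and colouring, in which every colour appears at every
vertex exactly once as an out-edge and once as an in-edge. -/
lemma two_factorization {V E : Type*} [Fintype V] [DecidableEq V] [Fintype E]
    (a b : E → V) (r : ℕ)
    (h : ∀ v, (∑ e, if a e = v then 1 else 0) + (∑ e, if b e = v then 1 else 0) = 2 * r) :
    ∃ (s t : E → V) (c : E → ℕ),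
      (∀ e, (s e = a e ∧ t e = b e) ∨ (s e = b e ∧ t e = a e)) ∧
      (∀ e, c e < r) ∧
      (∀ e e', s e = s e' → c e = c e' → e = e') ∧
      (∀ e e', t e = t e' → c e = c e' → e = e') ∧
      (∀ v, ∀ i < r, ∃ e, s e = v ∧ c e = i) ∧
      (∀ v, ∀ i < r, ∃ e, t e = v ∧ c e = i) := by
  classical
  obtain ⟨s, t, hst, hs, ht⟩ := balanced_orientation a b r h
  have hs' : ∀ v, (Finset.univ.filter (fun e => s e = v)).card = r := by
    intro v; rw [Finset.card_filter]; exact hs v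
  have ht' : ∀ v, (Finset.univ.filter (fun e => t e = v)).card = r := by
    intro v; rw [Finset.card_filter]; exact ht v
  obtain ⟨c, hc1, hc2, hc3⟩ := konig_regular s t r Finset.univ hs' ht'
  have surj : ∀ g : E → V, (∀ v, (Finset.univ.filter (fun e => g e = v)).card = r) →
      (∀ e e', g e = g e' → c e = c e' → e = e') →
      ∀ v, ∀ i < r, ∃ e, g e = v ∧ c e = i := by
    intro g hg hi v i hir
    have himg : (Finset.univ.filter (fun e => g e = v)).image c = Finset.range r := by
      apply Finset.eq_of_subset_of_card_le
      · intro x hx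
        obtain ⟨e, _, rfl⟩ := Finset.mem_image.1 hx
        exact Finset.mem_range.2 (hc1 e (Finset.mem_univ _))
      · rw [Finset.card_image_of_injOn, hg, Finset.card_range]
        intro e he e' he' hee
        simp at he he'
        exact hi e e' (he.trans he'.symm) hee
    have : i ∈ (Finset.univ.filter (fun e => g e = v)).image c := by
      rw [himg]; exact Finset.mem_range.2 hir
    obtain ⟨e, he, hei⟩ := Finset.mem_image.1 this
    exact ⟨e, by simpa using he, hei⟩
  have h2 : ∀ e e', s e = s e' → c e = c e' → e = e' :=
    fun e e' => hc2 e (Finset.mem_univ _) e' (Finset.mem_univ _)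
  have h3 : ∀ e e', t e = t e' → c e = c e' → e = e' :=
    fun e e' => hc3 e (Finset.mem_univ _) e' (Finset.mem_univ _)
  exact ⟨s, t, c, hst, fun e => hc1 e (Finset.mem_univ _), h2, h3,
    surj s hs' h2,
    surj t ht' h3⟩

/-- A two-element set closed under the pairing `2i+1 ↔ 2i+2` is an interval. -/
lemma interval_of_paired (r : ℕ) (T : Finset ℕ) (hT : T ⊆ Finset.Icc 1 (2 * r))
    (hp : ∀ i < r, (2 * i + 1 ∈ T ↔ 2 * i + 2 ∈ T)) (hc : T.card = 2) :
    IsIntervalSet (T : Set ℕ) := by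
  have hne : T.Nonempty := by rw [← Finset.card_pos]; omega
  obtain ⟨x, hx⟩ := hne
  have hx' := Finset.mem_Icc.1 (hT hx)
  have : ∃ i < r, 2 * i + 1 ∈ T ∧ 2 * i + 2 ∈ T := by
    refine ⟨(x - 1) / 2, by omega, ?_⟩
    have hi : (x - 1) / 2 < r := by omega
    rcases Nat.even_or_odd' (x - 1) with ⟨k, hk | hk⟩
    · have : x = 2 * ((x - 1) / 2) + 1 := by omega
      have h1 : 2 * ((x - 1) / 2) + 1 ∈ T := by rw [← this]; exact hx
      exact ⟨h1, (hp _ hi).1 h1⟩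
    · have : x = 2 * ((x - 1) / 2) + 2 := by omega
      have h1 : 2 * ((x - 1) / 2) + 2 ∈ T := by rw [← this]; exact hx
      exact ⟨(hp _ hi).2 h1, h1⟩
  obtain ⟨i, hi, h1, h2⟩ := this
  refine ⟨2 * i + 1, 2 * i + 2, ?_⟩
  have : Finset.Icc (2 * i + 1) (2 * i + 2) = T := by
    apply Finset.eq_of_subset_of_card_le
    · intro y hy
      rw [Finset.mem_Icc] at hy
      have : y = 2 * i + 1 ∨ y = 2 * i + 2 := by omega
      rcases this with rfl | rfl <;> assumption
    · rw [hc]; simp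
  rw [← this]
  simp

lemma interval_of_card_le_one (T : Finset ℕ) (hc : T.card ≤ 1) : IsIntervalSet (T : Set ℕ) := by
  rcases Nat.le_one_iff_eq_zero_or_eq_one.1 hc with h | h
  · rw [Finset.card_eq_zero] at h
    exact ⟨1, 0, by simp [h]⟩
  · obtain ⟨x, rfl⟩ := Finset.card_eq_one.1 h
    exact ⟨x, x, by simp⟩

/-- The half-edge colouring. -/
lemma half_edge_coloring {V : Type*} [Fintype V] [DecidableEq V] (H : SimpleGraph V)
    [DecidableRel H.Adj] (r : ℕ) (hΔ : ∀ v, H.degree v ≤ 2 * r) :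
    ∃ col : V → H.edgeSet → ℕ,
      (∀ v (e : H.edgeSet), v ∈ (e : Sym2 V) → col v e ∈ Finset.Icc 1 (2 * r)) ∧
      (∀ v (e e' : H.edgeSet), v ∈ (e : Sym2 V) → v ∈ (e' : Sym2 V) → col v e = col v e' → e = e') ∧
      (∀ e : H.edgeSet, ∃ u w i, (e : Sym2 V) = s(u, w) ∧
        col u e = 2 * i + 1 ∧ col w e = 2 * i + 2) ∧
      (∀ v, Even (H.degree v) → ∀ i < r,
        ((∃ e : H.edgeSet, v ∈ (e : Sym2 V) ∧ col v e = 2 * i + 1) ↔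
          (∃ e : H.edgeSet, v ∈ (e : Sym2 V) ∧ col v e = 2 * i + 2))) := by
  classical
  have hends : ∀ e : H.edgeSet, ∃ x y, (e : Sym2 V) = s(x, y) ∧ x ≠ y := by
    rintro ⟨e, he⟩
    induction e with
    | _ x y => exact ⟨x, y, rfl, H.ne_of_adj he⟩
  choose a b hab hne using hends
  have hmem : ∀ (e : H.edgeSet) v, v ∈ (e : Sym2 V) ↔ v = a e ∨ v = b e := by
    intro e v; rw [hab e, Sym2.mem_iff]
  -- degree formula
  have hdegsum : ∀ v, (∑ e, if a e = v then 1 else 0) + (∑ e, if b e = v then 1 else 0)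
      = H.degree v := by
    intro v
    rw [← Finset.sum_add_distrib, ← card_incidenceFinset_eq_degree]
    have h1 : ∀ e : H.edgeSet, ((if a e = v then 1 else 0) + (if b e = v then 1 else 0))
        = if v ∈ (e : Sym2 V) then 1 else 0 := by
      intro e
      have := hne e
      by_cases h1 : a e = v <;> by_cases h2 : b e = v
      · exact absurd (h1.trans h2.symm) this
      · simp [hmem, h1, h2]
      · simp [hmem, h1, h2]
      · simp [hmem, h1, h2, Ne.symm h1, Ne.symm h2]
    rw [Finset.sum_congr rfl (fun e _ => h1 e), ← Finset.card_filter]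
    apply Finset.card_bij (fun (e : H.edgeSet) _ => (e : Sym2 V))
    · intro e he
      rw [mem_incidenceFinset]
      exact ⟨e.2, by simpa using he⟩
    · intro e _ e' _ h; exact Subtype.ext h
    · intro e he
      rw [mem_incidenceFinset] at he
      exact ⟨⟨e, he.1⟩, by simpa using he.2, rfl⟩
  -- pairing of the odd vertices
  obtain ⟨m, hm⟩ := H.even_card_odd_degree_vertices
  have hcard : Fintype.card (Fin m ⊕ Fin m) = Fintype.card {v // Odd (H.degree v)} := by
    rw [Fintype.card_subtype, hm]; simp
  let p : Fin m ⊕ Fin m ≃ {v // Odd (H.degree v)} := Fintype.equivOfCardEq hcard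
  have hpsum : ∀ v, (∑ i, if (p (Sum.inl i)).1 = v then 1 else 0) +
      (∑ i, if (p (Sum.inr i)).1 = v then 1 else 0) = if Odd (H.degree v) then 1 else 0 := by
    intro v
    have h1 := Fintype.sum_sum_type (fun x => if (p x).1 = v then 1 else 0)
    rw [← h1, p.sum_comp (fun o : {v // Odd (H.degree v)} => if o.1 = v then 1 else 0)]
    by_cases ho : Odd (H.degree v)
    · rw [if_pos ho, Finset.sum_eq_single (⟨v, ho⟩ : {v // Odd (H.degree v)})]
      · simp
      · intro o _ hov
        rw [if_neg]
        intro h; exact hov (Subtype.ext h)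
      · simp
    · rw [if_neg ho]
      apply Finset.sum_eq_zero
      intro o _
      rw [if_neg]
      rintro rfl
      exact ho o.2
  -- the 2r-regular multigraph
  let L := Σ v : V, Fin (r - (H.degree v + 1) / 2)
  let A : H.edgeSet ⊕ (L ⊕ Fin m) → V :=
    Sum.elim a (Sum.elim (fun l => l.1) (fun i => (p (Sum.inl i)).1))
  let B : H.edgeSet ⊕ (L ⊕ Fin m) → V :=
    Sum.elim b (Sum.elim (fun l => l.1) (fun i => (p (Sum.inr i)).1))
  have hL : ∀ v, (∑ l : L, if l.1 = v then 1 else 0) = r - (H.degree v + 1) / 2 := by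
    intro v
    rw [Fintype.sum_sigma, Finset.sum_eq_single v]
    · simp
    · intro w _ hw
      simp [hw]
    · simp
  have hreg : ∀ v, (∑ e, if A e = v then 1 else 0) + (∑ e, if B e = v then 1 else 0)
      = 2 * r := by
    intro v
    rw [Fintype.sum_sum_type, Fintype.sum_sum_type, Fintype.sum_sum_type, Fintype.sum_sum_type]
    change (∑ e, if a e = v then 1 else 0) + ((∑ l : L, if l.1 = v then 1 else 0) +
      (∑ i, if (p (Sum.inl i)).1 = v then 1 else 0)) + ((∑ e, if b e = v then 1 else 0) +
      ((∑ l : L, if l.1 = v then 1 else 0) +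
      (∑ i, if (p (Sum.inr i)).1 = v then 1 else 0))) = 2 * r
    rw [hL v]
    have h1 := hdegsum v
    have h2 := hpsum v
    have h3 := hΔ v
    by_cases ho : Odd (H.degree v)
    · rw [if_pos ho] at h2
      obtain ⟨k, hk⟩ := ho
      omega
    · rw [if_neg ho] at h2
      rw [Nat.not_odd_iff_even] at ho
      obtain ⟨k, hk⟩ := ho
      omega
  obtain ⟨s, t, c, hst, hcr, hinjs, hinjt, hsurs, hsurt⟩ := two_factorization A B r hreg
  have hends' : ∀ e : H.edgeSet, (e : Sym2 V) = s(s (Sum.inl e), t (Sum.inl e)) := by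
    intro e
    rcases hst (Sum.inl e) with ⟨h1, h2⟩ | ⟨h1, h2⟩
    · rw [h1, h2, hab e]; rfl
    · rw [h1, h2, hab e, Sym2.eq_swap]; rfl
  have hne' : ∀ e : H.edgeSet, s (Sum.inl e) ≠ t (Sum.inl e) := by
    intro e
    rcases hst (Sum.inl e) with ⟨h1, h2⟩ | ⟨h1, h2⟩
    · rw [h1, h2]; exact hne e
    · rw [h1, h2]; exact (hne e).symm
  have hmem' : ∀ (e : H.edgeSet) v, v ∈ (e : Sym2 V) ↔ v = s (Sum.inl e) ∨ v = t (Sum.inl e) := by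
    intro e v; rw [hends' e, Sym2.mem_iff]
  let col : V → H.edgeSet → ℕ := fun v e =>
    if v = s (Sum.inl e) then 2 * c (Sum.inl e) + 1 else 2 * c (Sum.inl e) + 2
  have cols : ∀ e v, v = s (Sum.inl e) → col v e = 2 * c (Sum.inl e) + 1 := by
    intro e v h; simp [col, h]
  have colt : ∀ e v, v = t (Sum.inl e) → col v e = 2 * c (Sum.inl e) + 2 := by
    intro e v h; simp [col, h, (hne' e).symm]
  -- extra edges at an even vertex are loops
  have hextra : ∀ v, Even (H.degree v) → ∀ x : L ⊕ Fin m,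
      (s (Sum.inr x) = v ↔ t (Sum.inr x) = v) := by
    rintro v hv (l | i)
    · rcases hst (Sum.inr (Sum.inl l)) with ⟨h1, h2⟩ | ⟨h1, h2⟩ <;>
      · rw [h1, h2]; exact Iff.rfl
    · have hA : A (Sum.inr (Sum.inr i)) ≠ v := by
        rintro rfl
        exact (Nat.not_odd_iff_even.2 hv) (p (Sum.inl i)).2
      have hB : B (Sum.inr (Sum.inr i)) ≠ v := by
        rintro rfl
        exact (Nat.not_odd_iff_even.2 hv) (p (Sum.inr i)).2
      rcases hst (Sum.inr (Sum.inr i)) with ⟨h1, h2⟩ | ⟨h1, h2⟩ <;>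
      · rw [h1, h2]; simp [hA, hB]
  refine ⟨col, ?_, ?_, ?_, ?_⟩
  · intro v e hv
    have := hcr (Sum.inl e)
    rw [Finset.mem_Icc]
    rcases (hmem' e v).1 hv with h | h
    · rw [cols e v h]; omega
    · rw [colt e v h]; omega
  · intro v e e' hv hv' hcc
    rcases (hmem' e v).1 hv with h | h <;> rcases (hmem' e' v).1 hv' with h' | h'
    · rw [cols e v h, cols e' v h'] at hcc
      exact Sum.inl_injective (hinjs _ _ (h.symm.trans h') (by omega))
    · rw [cols e v h, colt e' v h'] at hcc; omega
    · rw [colt e v h, cols e' v h'] at hcc; omega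
    · rw [colt e v h, colt e' v h'] at hcc
      exact Sum.inl_injective (hinjt _ _ (h.symm.trans h') (by omega))
  · intro e
    exact ⟨s (Sum.inl e), t (Sum.inl e), c (Sum.inl e), hends' e, cols e _ rfl, colt e _ rfl⟩
  · intro v hv i hi
    constructor
    · rintro ⟨e, he, hce⟩
      rcases (hmem' e v).1 he with h | h
      · rw [cols e v h] at hce
        obtain ⟨e', h1, h2⟩ := hsurt v i hi
        rcases e' with e' | x
        · exact ⟨e', (hmem' e' v).2 (Or.inr h1.symm), by rw [colt e' v h1.symm, h2]⟩
        · have h3 := (hextra v hv x).2 h1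
          have := hinjs (Sum.inl e) (Sum.inr x) (by rw [← h, h3]) (by omega)
          simp at this
      · rw [colt e v h] at hce; omega
    · rintro ⟨e, he, hce⟩
      rcases (hmem' e v).1 he with h | h
      · rw [cols e v h] at hce; omega
      · rw [colt e v h] at hce
        obtain ⟨e', h1, h2⟩ := hsurs v i hi
        rcases e' with e' | x
        · exact ⟨e', (hmem' e' v).2 (Or.inl h1.symm), by rw [cols e' v h1.symm, h2]⟩
        · have h3 := (hextra v hv x).1 h1
          have := hinjt (Sum.inl e) (Sum.inr x) (by rw [← h, h3]) (by omega)
          simp at this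

/-- Transfer a half-edge colouring to `Sym2`. -/
def liftCol {V W : Type*} (col : V → W → ℕ) : Sym2 (V ⊕ W) → ℕ :=
  Sym2.lift ⟨fun x y => match x, y with
    | Sum.inl v, Sum.inr e => col v e
    | Sum.inr e, Sum.inl v => col v e
    | _, _ => 0, by rintro (x | x) (y | y) <;> rfl⟩

lemma fullSubdivision_edge {V : Type*} (H : SimpleGraph V) (z : Sym2 (V ⊕ H.edgeSet)) :
    z ∈ (fullSubdivision H).edgeSet ↔
      ∃ (v : V) (e : H.edgeSet), v ∈ (e : Sym2 V) ∧ z = s(Sum.inl v, Sum.inr e) := by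
  induction z with
  | _ x y =>
    rw [mem_edgeSet, fullSubdivision, fromRel_adj]
    constructor
    · rintro ⟨_, ⟨v, e, h, rfl, rfl⟩ | ⟨v, e, h, rfl, rfl⟩⟩
      · exact ⟨v, e, h, rfl⟩
      · exact ⟨v, e, h, Sym2.eq_swap⟩
    · rintro ⟨v, e, h, hz⟩
      rw [Sym2.eq_iff] at hz
      rcases hz with ⟨rfl, rfl⟩ | ⟨rfl, rfl⟩
      · exact ⟨by simp, Or.inl ⟨v, e, h, rfl, rfl⟩⟩
      · exact ⟨by simp, Or.inr ⟨v, e, h, rfl, rfl⟩⟩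

/-- if `H` has maximum degree `2r` (`r ≥ 2`) and every vertex has degree
`≥ 2r - 2` or `≤ 2`, then the full subdivision of `H` has a cyclic interval `2r`-coloring. -/
theorem stmt_1 {V : Type*} [Fintype V] [DecidableEq V] (H : SimpleGraph V)
    [DecidableRel H.Adj] (r : ℕ) (hr : 2 ≤ r) (hΔ : H.maxDegree = 2 * r)
    (hdeg : ∀ v : V, 2 * r - 2 ≤ H.degree v ∨ H.degree v ≤ 2) :
    ∃ c : Sym2 (V ⊕ H.edgeSet) → ℕ, IsCyclicIntervalColoring (fullSubdivision H) (2 * r) c := by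
  classical
  have hΔ' : ∀ v, H.degree v ≤ 2 * r := fun v => hΔ ▸ H.degree_le_maxDegree v
  obtain ⟨col, hcol, hinj, hedge, heven⟩ := half_edge_coloring H r hΔ'
  have hl : ∀ v e, liftCol col s(Sum.inl v, Sum.inr e) = col v e := fun v e => rfl
  refine ⟨liftCol col, ⟨?_, ?_⟩, ?_⟩
  · intro z hz
    obtain ⟨v, e, hv, rfl⟩ := (fullSubdivision_edge H z).1 hz
    rw [hl]
    have := hcol v e hv
    simpa using this
  · intro z hz z' hz' hne hx hcc
    obtain ⟨v, e, hv, rfl⟩ := (fullSubdivision_edge H z).1 hz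
    obtain ⟨v', e', hv', rfl⟩ := (fullSubdivision_edge H z').1 hz'
    rw [hl, hl] at hcc
    obtain ⟨x, hx1, hx2⟩ := hx
    rw [Sym2.mem_iff] at hx1 hx2
    rcases hx1 with rfl | rfl
    · simp at hx2
      subst hx2
      exact hne (by rw [hinj v e e' hv hv' hcc])
    · simp at hx2
      subst hx2
      obtain ⟨u, w, i, he, hu, hw⟩ := hedge e
      rw [he, Sym2.mem_iff] at hv hv'
      rcases hv with rfl | rfl <;> rcases hv' with rfl | rfl
      · exact hne rfl
      · omega
      · omega
      · exact hne rfl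
  · rintro (v | e)
    · let S : Finset ℕ := (Finset.univ.filter (fun e : H.edgeSet => v ∈ (e : Sym2 V))).image (col v)
      have memS : ∀ x, x ∈ S ↔ ∃ e : H.edgeSet, v ∈ (e : Sym2 V) ∧ col v e = x := by
        intro x; simp only [S, Finset.mem_image, Finset.mem_filter, Finset.mem_univ, true_and]
      have hS : colorsAt (fullSubdivision H) (liftCol col) (Sum.inl v) = (S : Set ℕ) := by
        ext x
        rw [Finset.mem_coe, memS]
        constructor
        · rintro ⟨z, ⟨hz1, hz2⟩, rfl⟩
          obtain ⟨v', e, hv, rfl⟩ := (fullSubdivision_edge H z).1 hz1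
          simp at hz2
          subst hz2
          exact ⟨e, hv, (hl _ _).symm⟩
        · rintro ⟨e, hv, rfl⟩
          exact ⟨s(Sum.inl v, Sum.inr e), ⟨(fullSubdivision_edge H _).2 ⟨v, e, hv, rfl⟩,
            by simp⟩, hl _ _⟩
      have hsub : S ⊆ Finset.Icc 1 (2 * r) := by
        intro x hx
        obtain ⟨e, hv, rfl⟩ := (memS x).1 hx
        exact hcol v e hv
      have hScard : S.card = H.degree v := by
        rw [Finset.card_image_of_injOn, ← card_incidenceFinset_eq_degree]
        · apply Finset.card_bij (fun (e : H.edgeSet) _ => (e : Sym2 V))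
          · intro e he
            rw [mem_incidenceFinset]
            exact ⟨e.2, by simpa using he⟩
          · intro e _ e' _ h; exact Subtype.ext h
          · intro e he
            rw [mem_incidenceFinset] at he
            exact ⟨⟨e, he.1⟩, by simpa using he.2, rfl⟩
        · intro e he e' he' hee
          exact hinj v e e' (by simpa using he) (by simpa using he') hee
      have hC : Set.Icc 1 (2 * r) \ (S : Set ℕ) = ((Finset.Icc 1 (2 * r) \ S : Finset ℕ) : Set ℕ) := by
        simp
      have hCcard : (Finset.Icc 1 (2 * r) \ S).card = 2 * r - H.degree v := by
        rw [Finset.card_sdiff_of_subset hsub, hScard]; simp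
      have hpair : Even (H.degree v) → ∀ i < r, (2 * i + 1 ∈ S ↔ 2 * i + 2 ∈ S) := by
        intro he i hi
        rw [memS, memS]
        exact heven v he i hi
      rw [hS, hC]
      have hd := hΔ' v
      by_cases h1 : H.degree v ≤ 1
      · exact Or.inl (interval_of_card_le_one S (by omega))
      by_cases h2 : H.degree v = 2
      · exact Or.inl (interval_of_paired r S hsub (hpair (by rw [h2]; exact even_two)) (by omega))
      have h3 : 2 * r - 2 ≤ H.degree v := by
        rcases hdeg v with h | h
        · exact h
        · omega
      by_cases h4 : H.degree v = 2 * r - 2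
      · refine Or.inr (interval_of_paired r _ Finset.sdiff_subset ?_ (by omega))
        intro i hi
        have := hpair (by rw [h4]; exact ⟨r - 1, by omega⟩) i hi
        rw [Finset.mem_sdiff, Finset.mem_sdiff, this, Finset.mem_Icc, Finset.mem_Icc]
        constructor
        · rintro ⟨_, h⟩; exact ⟨by omega, h⟩
        · rintro ⟨_, h⟩; exact ⟨by omega, h⟩
      · exact Or.inr (interval_of_card_le_one _ (by omega))
    · left
      obtain ⟨u, w, i, he, hu, hw⟩ := hedge e
      refine ⟨2 * i + 1, 2 * i + 2, ?_⟩
      ext x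
      rw [Set.mem_Icc]
      constructor
      · rintro ⟨z, ⟨hz1, hz2⟩, rfl⟩
        obtain ⟨v, e', hv, rfl⟩ := (fullSubdivision_edge H z).1 hz1
        simp at hz2
        subst hz2
        rw [he, Sym2.mem_iff] at hv
        rw [hl]
        rcases hv with rfl | rfl <;> omega
      · intro hx
        have : x = 2 * i + 1 ∨ x = 2 * i + 2 := by omega
        rcases this with rfl | rfl
        · exact ⟨s(Sum.inl u, Sum.inr e), ⟨(fullSubdivision_edge H _).2 ⟨u, e, by simp [he], rfl⟩,
            by simp⟩, by rw [hl, hu]⟩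
        · exact ⟨s(Sum.inl w, Sum.inr e), ⟨(fullSubdivision_edge H _).2 ⟨w, e, by simp [he], rfl⟩,
            by simp⟩, by rw [hl, hw]⟩
end

section
/- Every finite bipartite graph G with maximum degree Δ(G) = 4 admits a cyclic interval 4-coloring; consequently G is cyclically interval colorable and the least t for which G has a cyclic interval t-coloring equals 4. -/
open SimpleGraph

/-- Pairing up the elements of each fiber of `l`, with at most one left over. -/
lemma exists_pairing_s3 {E X : Type*} [Finite E] (l : E → X) :
    ∃ f : E → E, Function.Involutive f ∧ (∀ e, l (f e) = l e) ∧
      ∀ a b, f a = a → f b = b → l a = l b → a = b := by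
  classical
  have := Fintype.ofFinite E
  let P : ℕ → Prop := fun n => ∃ f : E → E, Function.Involutive f ∧ (∀ e, l (f e) = l e) ∧
    (Finset.univ.filter (fun e => f e = e)).card = n
  have hP : ∃ n, P n := ⟨_, id, fun _ => rfl, fun _ => rfl, rfl⟩
  obtain ⟨f, hf, hl, hn⟩ := Nat.find_spec hP
  refine ⟨f, hf, hl, ?_⟩
  intro a b ha hb hab
  by_contra hne
  have hmin := fun m (hm : m < Nat.find hP) => Nat.find_min hP hm
  let g : E → E := fun e => if e = a then b else if e = b then a else f e
  have hfa : ∀ e, f e = a → e = a := fun e he => by rw [← hf e, he, ha]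
  have hfb : ∀ e, f e = b → e = b := fun e he => by rw [← hf e, he, hb]
  refine hmin (Finset.univ.filter (fun e => g e = e)).card ?_ ⟨g, ?_, ?_, rfl⟩
  · rw [← hn]
    apply Finset.card_lt_card
    rw [Finset.ssubset_iff_of_subset]
    · refine ⟨a, by simp [ha], ?_⟩
      simp [g, Ne.symm hne]
    · intro e
      simp only [Finset.mem_filter, Finset.mem_univ, true_and, g]
      split_ifs with h1 h2
      · intro h; exact absurd (h1.symm.trans h.symm) hne
      · intro h; exact absurd (h.trans h2) hne
      · exact id
  · intro e
    have h3 := hfa e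
    have h4 := hfb e
    have h5 := hf e
    simp only [g]
    split_ifs <;> grind
  · intro e
    simp only [g]
    split_ifs with h1 h2
    · rw [h1, hab]
    · rw [h2, hab]
    · exact hl e

/-- Two fixed-point-free involutions can be simultaneously 2-colored. -/
lemma exists_color_free {E : Type*} (f g : Equiv.Perm E)
    (hf : ∀ e, f (f e) = e) (hg : ∀ e, g (g e) = e)
    (hf' : ∀ e, f e ≠ e) (hg' : ∀ e, g e ≠ e) :
    ∃ χ : E → Bool, ∀ e, χ (f e) ≠ χ e ∧ χ (g e) ≠ χ e := by
  let H : SimpleGraph E :=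
    { Adj := fun x y => y = f x ∨ y = g x
      symm := ⟨by
        rintro x y (h | h)
        · left; rw [h, hf]
        · right; rw [h, hg]⟩
      loopless := ⟨by
        rintro x (h | h)
        · exact hf' x h.symm
        · exact hg' x h.symm⟩ }
  have hff : f * f = 1 := Equiv.ext hf
  have hgg : g * g = 1 := Equiv.ext hg
  have hfi : f⁻¹ = f := inv_eq_of_mul_eq_one_right hff
  have hgi : g⁻¹ = g := inv_eq_of_mul_eq_one_right hgg
  set ρ : Equiv.Perm E := f * g with hρ
  have hconj1 : f * ρ * f⁻¹ = ρ⁻¹ := by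
    rw [hρ, mul_inv_rev, hfi, hgi, ← mul_assoc, hff, one_mul]
  have hconj : ∀ k : ℤ, f * ρ ^ k = ρ ^ (-k) * f := by
    intro k
    have : f * ρ ^ k * f⁻¹ = ρ ^ (-k) := by rw [← conj_zpow, hconj1, inv_zpow, zpow_neg]
    rw [← this]; group
  have hgρ : g = ρ ^ (-1 : ℤ) * f := by
    rw [zpow_neg_one, hρ, mul_inv_rev, hfi, hgi, mul_assoc, hff, mul_one]
  have key : ∀ (u v : E) (p : H.Walk u v),
      (Even p.length → ∃ k : ℤ, u = (ρ ^ k) v) ∧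
      (Odd p.length → ∃ k : ℤ, u = (ρ ^ k * f) v) := by
    intro u v p
    induction p with
    | nil => exact ⟨fun _ => ⟨0, by simp⟩, fun h => by simp at h⟩
    | @cons u w v h p ih =>
      have hu : u = f w ∨ u = g w := h.symm
      have hstep : ∃ j : ℤ, u = (ρ ^ j * f) w := by
        rcases hu with h | h
        · exact ⟨0, by simpa using h⟩
        · exact ⟨-1, by rw [← hgρ]; exact h⟩
      obtain ⟨j, hj⟩ := hstep
      rw [SimpleGraph.Walk.length_cons]
      constructor
      · intro he
        have : Odd p.length := by
          rw [Nat.even_add_one] at he; exact Nat.not_even_iff_odd.mp he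
        obtain ⟨k, hk⟩ := ih.2 this
        refine ⟨j - k, ?_⟩
        rw [hj, hk, ← Equiv.Perm.mul_apply]
        congr 1
        rw [mul_assoc, ← mul_assoc f, hconj, mul_assoc, hff, mul_one, ← zpow_add, sub_eq_add_neg]
      · intro he
        have : Even p.length := by
          rw [Nat.odd_add_one] at he; exact Nat.not_odd_iff_even.mp he
        obtain ⟨k, hk⟩ := ih.1 this
        refine ⟨j - k, ?_⟩
        rw [hj, hk, ← Equiv.Perm.mul_apply]
        congr 1
        rw [mul_assoc, hconj, ← mul_assoc, ← zpow_add, sub_eq_add_neg]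
  have hcol : H.Colorable 2 := by
    rw [SimpleGraph.two_colorable_iff_forall_loop_even]
    intro u p
    by_contra hodd
    obtain ⟨k, hk⟩ := (key u u p).2 (Nat.not_even_iff_odd.mp hodd)
    rcases Int.even_or_odd' k with ⟨j, rfl | rfl⟩
    · apply hf' ((ρ ^ (-j)) u)
      have : f * ρ ^ (-j) = ρ ^ (-j) * (ρ ^ (2 * j) * f) := by
        rw [hconj, ← mul_assoc, ← zpow_add]; congr 2; ring
      rw [← Equiv.Perm.mul_apply, this, Equiv.Perm.mul_apply, ← hk]
    · apply hg' ((ρ ^ (-j - 1)) u)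
      have : g * ρ ^ (-j - 1) = ρ ^ (-j - 1) * (ρ ^ (2 * j + 1) * f) := by
        conv_lhs => rw [hgρ]
        rw [mul_assoc, hconj, ← mul_assoc, ← zpow_add, ← mul_assoc, ← zpow_add]; congr 2; ring
      rw [← Equiv.Perm.mul_apply, this, Equiv.Perm.mul_apply, ← hk]
  obtain ⟨C⟩ := hcol
  refine ⟨fun e => decide (C e = 0), fun e => ?_⟩
  have h1 : C e ≠ C (f e) := C.valid (show H.Adj e (f e) from Or.inl rfl)
  have h2 : C e ≠ C (g e) := C.valid (show H.Adj e (g e) from Or.inr rfl)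
  constructor
  · intro h; simp only [decide_eq_decide] at h; omega
  · intro h; simp only [decide_eq_decide] at h; omega

/-- The double of an involution, without fixed points. -/
lemma exists_double {E : Type*} (f : E → E) (hf : Function.Involutive f) :
    ∃ F : Equiv.Perm (E × Bool), (∀ e, F (F e) = e) ∧ (∀ e, F e ≠ e) ∧
      ∀ e b, f e ≠ e → F (e, b) = (f e, b) := by
  classical
  let F : E × Bool → E × Bool := fun p => if f p.1 = p.1 then (p.1, !p.2) else (f p.1, p.2)
  have hF : Function.Involutive F := by
    rintro ⟨e, b⟩
    by_cases h : f e = e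
    · simp [F, h]
    · have : f (f e) ≠ f e := fun h' => h (hf.injective h')
      simp [F, h, hf e, Ne.symm h]
  refine ⟨hF.toPerm, hF, ?_, ?_⟩
  · rintro ⟨e, b⟩
    change F (e, b) ≠ (e, b)
    by_cases h : f e = e
    · simp [F, h]
    · simp [F, h]
  · intro e b h
    change F (e, b) = _
    simp [F, h]

lemma exists_color {E : Type*} (f g : E → E) (hf : Function.Involutive f)
    (hg : Function.Involutive g) :
    ∃ χ : E → Bool, ∀ e, (f e ≠ e → χ (f e) ≠ χ e) ∧ (g e ≠ e → χ (g e) ≠ χ e) := by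
  obtain ⟨F, hF1, hF2, hF3⟩ := exists_double f hf
  obtain ⟨K, hK1, hK2, hK3⟩ := exists_double g hg
  obtain ⟨χ, hχ⟩ := exists_color_free F K hF1 hK1 hF2 hK2
  refine ⟨fun e => χ (e, false), fun e => ⟨fun h => ?_, fun h => ?_⟩⟩
  · have := (hχ (e, false)).1
    rwa [hF3 e false h] at this
  · have := (hχ (e, false)).2
    rwa [hK3 e false h] at this

lemma card_balanced {E X : Type*} [Fintype E] [DecidableEq X] (l : E → X) (f : E → E)
    (hf : Function.Involutive f) (hl : ∀ e, l (f e) = l e)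
    (hfix : ∀ a b, f a = a → f b = b → l a = l b → a = b) (χ : E → Bool)
    (hχ : ∀ e, f e ≠ e → χ (f e) ≠ χ e) (x : X) (b : Bool) :
    (Finset.univ.filter (fun e => l e = x ∧ χ e = b)).card ≤
      (Finset.univ.filter (fun e => l e = x ∧ χ e ≠ b)).card + 1 := by
  classical
  set T := Finset.univ.filter (fun e => l e = x ∧ χ e = b) with hT
  have h1 : (T.filter (fun e => f e = e)).card ≤ 1 := by
    rw [Finset.card_le_one]
    intro a ha c hc
    simp only [hT, Finset.mem_filter, Finset.mem_univ, true_and] at ha hc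
    exact hfix a c ha.2 hc.2 (ha.1.1.trans hc.1.1.symm)
  have h2 : (T.filter (fun e => ¬ f e = e)).card ≤
      (Finset.univ.filter (fun e => l e = x ∧ χ e ≠ b)).card := by
    apply Finset.card_le_card_of_injOn f
    · intro a ha
      simp only [hT, Finset.coe_filter, Finset.mem_filter, Finset.mem_univ, true_and,
        Set.mem_ofPred_eq] at ha ⊢
      refine ⟨(hl a).trans ha.1.1, ?_⟩
      rw [← ha.1.2]
      exact hχ a ha.2
    · exact hf.injective.injOn
  have h3 := Finset.card_filter_add_card_filter_not (s := T) (fun e => f e = e)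
  omega

lemma graph_split {V K : Type*} [Fintype V] [DecidableEq V] [DecidableEq K] (G : SimpleGraph V)
    [Fintype G.edgeSet]
    (hbip : G.Colorable 2) (κ : G.edgeSet → K) :
    ∃ χ : G.edgeSet → Bool, ∀ (v : V) (k : K) (b : Bool),
      (Finset.univ.filter (fun e : G.edgeSet => (v ∈ e.1 ∧ κ e = k) ∧ χ e = b)).card ≤
      (Finset.univ.filter (fun e : G.edgeSet => (v ∈ e.1 ∧ κ e = k) ∧ χ e ≠ b)).card + 1 := by
  obtain ⟨C⟩ := hbip
  have hend : ∀ (i : Fin 2) (e : G.edgeSet), ∃ w : V, ∀ v, C v = i → (v ∈ e.1 ↔ w = v) := by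
    rintro i ⟨e, he⟩
    induction e using Sym2.ind with
    | _ a b =>
      have hab : C a ≠ C b := C.valid he
      by_cases ha : C a = i
      · refine ⟨a, fun v hv => ?_⟩
        simp only [Sym2.mem_iff]
        constructor
        · rintro (h | h)
          · exact h.symm
          · subst h; exact absurd (ha.trans hv.symm) hab
        · intro h; exact Or.inl h.symm
      · have hb : C b = i := by omega
        refine ⟨b, fun v hv => ?_⟩
        simp only [Sym2.mem_iff]
        constructor
        · rintro (h | h)
          · subst h; exact absurd hv ha
          · exact h.symm
        · intro h; exact Or.inr h.symm
  choose en hen using hend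
  obtain ⟨f, hf1, hf2, hf3⟩ := exists_pairing_s3 (fun e => (en 0 e, κ e))
  obtain ⟨g, hg1, hg2, hg3⟩ := exists_pairing_s3 (fun e => (en 1 e, κ e))
  obtain ⟨χ, hχ⟩ := exists_color f g hf1 hg1
  refine ⟨χ, fun v k b => ?_⟩
  have h0 := card_balanced _ f hf1 hf2 hf3 χ (fun e => (hχ e).1) (v, k) b
  have h1 := card_balanced _ g hg1 hg2 hg3 χ (fun e => (hχ e).2) (v, k) b
  simp only [Prod.mk.injEq] at h0 h1
  have hv : C v = 0 ∨ C v = 1 := by omega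
  rcases hv with hv | hv
  · simpa only [hen 0 _ v hv] using h0
  · simpa only [hen 1 _ v hv] using h1

lemma interval_or (S : Set ℕ) (hS : S ⊆ Set.Icc 1 4)
    (h13 : ¬ (1 ∈ S ∧ 3 ∈ S ∧ 2 ∉ S ∧ 4 ∉ S)) (h24 : ¬ (2 ∈ S ∧ 4 ∈ S ∧ 1 ∉ S ∧ 3 ∉ S)) :
    IsIntervalSet S ∨ IsIntervalSet (Set.Icc 1 4 \ S) := by
  have hS' : ∀ n, n ∈ S → n = 1 ∨ n = 2 ∨ n = 3 ∨ n = 4 := by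
    intro n hn
    have := hS hn
    simp only [Set.mem_Icc] at this
    omega
  have mkI : ∀ a b : ℕ, (∀ n, n ∈ S ↔ a ≤ n ∧ n ≤ b) → IsIntervalSet S :=
    fun a b h => ⟨a, b, Set.ext fun n => by rw [h n, Set.mem_Icc]⟩
  have mkC : ∀ a b : ℕ, (∀ n, (1 ≤ n ∧ n ≤ 4) ∧ n ∉ S ↔ a ≤ n ∧ n ≤ b) →
      IsIntervalSet (Set.Icc 1 4 \ S) :=
    fun a b h => ⟨a, b, Set.ext fun n => by
      rw [Set.mem_sdiff, Set.mem_Icc, Set.mem_Icc]; exact h n⟩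
  have fin : ∀ a b : ℕ, 1 ≤ a → b ≤ 4 → ((1 ∈ S) ↔ a ≤ 1 ∧ 1 ≤ b) → ((2 ∈ S) ↔ a ≤ 2 ∧ 2 ≤ b) →
      ((3 ∈ S) ↔ a ≤ 3 ∧ 3 ≤ b) → ((4 ∈ S) ↔ a ≤ 4 ∧ 4 ≤ b) → IsIntervalSet S := by
    intro a b ha hb h1 h2 h3 h4
    apply mkI a b
    intro n
    constructor
    · intro hn
      rcases hS' n hn with rfl | rfl | rfl | rfl
      exacts [h1.1 hn, h2.1 hn, h3.1 hn, h4.1 hn]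
    · intro hn
      have : n = 1 ∨ n = 2 ∨ n = 3 ∨ n = 4 := by omega
      rcases this with rfl | rfl | rfl | rfl
      exacts [h1.2 hn, h2.2 hn, h3.2 hn, h4.2 hn]
  have finC : ∀ a b : ℕ, 1 ≤ a → b ≤ 4 → ((1 ∉ S) ↔ a ≤ 1 ∧ 1 ≤ b) → ((2 ∉ S) ↔ a ≤ 2 ∧ 2 ≤ b) →
      ((3 ∉ S) ↔ a ≤ 3 ∧ 3 ≤ b) → ((4 ∉ S) ↔ a ≤ 4 ∧ 4 ≤ b) →
      IsIntervalSet (Set.Icc 1 4 \ S) := by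
    intro a b ha hb h1 h2 h3 h4
    apply mkC a b
    intro n
    constructor
    · rintro ⟨hn, hn'⟩
      have : n = 1 ∨ n = 2 ∨ n = 3 ∨ n = 4 := by omega
      rcases this with rfl | rfl | rfl | rfl
      exacts [h1.1 hn', h2.1 hn', h3.1 hn', h4.1 hn']
    · intro hn
      have : n = 1 ∨ n = 2 ∨ n = 3 ∨ n = 4 := by omega
      rcases this with rfl | rfl | rfl | rfl
      exacts [⟨by omega, h1.2 hn⟩, ⟨by omega, h2.2 hn⟩, ⟨by omega, h3.2 hn⟩, ⟨by omega, h4.2 hn⟩]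
  by_cases h1 : 1 ∈ S <;> by_cases h2 : 2 ∈ S <;> by_cases h3 : 3 ∈ S <;> by_cases h4 : 4 ∈ S
  · left; apply fin 1 4 <;> simp [*]
  · left; apply fin 1 3 <;> simp [*]
  · right; apply finC 3 3 <;> simp [*]
  · left; apply fin 1 2 <;> simp [*]
  · right; apply finC 2 2 <;> simp [*]
  · exact absurd ⟨h1, h3, h2, h4⟩ h13
  · right; apply finC 2 3 <;> simp [*]
  · left; apply fin 1 1 <;> simp [*]
  · left; apply fin 2 4 <;> simp [*]
  · left; apply fin 2 3 <;> simp [*]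
  · exact absurd ⟨h2, h4, h1, h3⟩ h24
  · left; apply fin 2 2 <;> simp [*]
  · left; apply fin 3 4 <;> simp [*]
  · left; apply fin 3 3 <;> simp [*]
  · left; apply fin 4 4 <;> simp [*]
  · left; apply fin 1 0 <;> simp [*]

/-- The color encoded by two bits. -/
def bitColor : Bool → Bool → ℕ
  | true, true => 1
  | true, false => 3
  | false, true => 2
  | false, false => 4

lemma exists_cyclic_four {V : Type*} [Fintype V] (G : SimpleGraph V) [DecidableRel G.Adj]
    (hbip : G.Colorable 2) (hΔ : G.maxDegree ≤ 4) :
    ∃ c : Sym2 V → ℕ, IsCyclicIntervalColoring G 4 c := by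
  classical
  obtain ⟨χ₁, h1⟩ := graph_split G hbip (fun _ => ())
  obtain ⟨χ₂, h2⟩ := graph_split G hbip χ₁
  simp only [and_true] at h1
  have hdeg : ∀ v, (Finset.univ.filter (fun e : G.edgeSet => v ∈ e.1)).card ≤ 4 := by
    intro v
    refine le_trans ?_ ((G.degree_le_maxDegree v).trans hΔ)
    rw [← G.card_incidenceFinset_eq_degree v]
    apply Finset.card_le_card_of_injOn Subtype.val
    · intro e he
      simp only [Finset.coe_filter, Finset.mem_univ, true_and, Set.mem_ofPred_eq] at he
      simp only [Finset.mem_coe, mem_incidenceFinset]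
      exact ⟨e.2, he⟩
    · exact Subtype.val_injective.injOn
  have hsize : ∀ v b, (Finset.univ.filter (fun e : G.edgeSet => v ∈ e.1 ∧ χ₁ e = b)).card ≤ 2 := by
    intro v b
    have ha := h1 v () b
    have hb := hdeg v
    rw [← Finset.card_filter_add_card_filter_not (fun e => χ₁ e = b), Finset.filter_filter,
      Finset.filter_filter] at hb
    simp only [ne_eq] at ha
    omega
  have hproper : ∀ (v : V) (e e' : G.edgeSet), v ∈ e.1 → v ∈ e'.1 → χ₁ e = χ₁ e' →
      χ₂ e = χ₂ e' → e = e' := by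
    intro v e e' he he' hc1 hc2
    by_contra hne
    have ha := h2 v (χ₁ e) (χ₂ e)
    have hb := hsize v (χ₁ e)
    rw [← Finset.card_filter_add_card_filter_not (fun a => χ₂ a = χ₂ e), Finset.filter_filter,
      Finset.filter_filter] at hb
    have hc : 1 < (Finset.univ.filter
        (fun a : G.edgeSet => (v ∈ a.1 ∧ χ₁ a = χ₁ e) ∧ χ₂ a = χ₂ e)).card := by
      rw [Finset.one_lt_card]
      exact ⟨e, by simp [he], e', by simp [he', hc1, hc2], hne⟩
    simp only [ne_eq] at ha
    omega
  have hbal : ∀ (v : V) (e e' : G.edgeSet), v ∈ e.1 → v ∈ e'.1 → e ≠ e' → χ₁ e = χ₁ e' →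
      ∃ e'' : G.edgeSet, v ∈ e''.1 ∧ χ₁ e'' ≠ χ₁ e := by
    intro v e e' he he' hne hc
    have ha := h1 v () (χ₁ e)
    have hc : 1 < (Finset.univ.filter (fun a : G.edgeSet => v ∈ a.1 ∧ χ₁ a = χ₁ e)).card := by
      rw [Finset.one_lt_card]
      exact ⟨e, by simp [he], e', by simp [he', hc], hne⟩
    have hpos : 0 < (Finset.univ.filter (fun a : G.edgeSet => v ∈ a.1 ∧ χ₁ a ≠ χ₁ e)).card := by
      omega
    obtain ⟨x, hx⟩ := Finset.card_pos.mp hpos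
    simp only [Finset.mem_filter, Finset.mem_univ, true_and] at hx
    exact ⟨x, hx⟩
  let c : Sym2 V → ℕ := fun e => if h : e ∈ G.edgeSet then bitColor (χ₁ ⟨e, h⟩) (χ₂ ⟨e, h⟩) else 0
  have hc : ∀ e : G.edgeSet, c e.1 = bitColor (χ₁ e) (χ₂ e) := by
    rintro ⟨e, he⟩
    simp [c, he]
  have hrange : ∀ e ∈ G.edgeSet, c e ∈ Set.Icc 1 4 := by
    intro e he
    rw [hc ⟨e, he⟩]
    generalize χ₁ ⟨e, he⟩ = p
    generalize χ₂ ⟨e, he⟩ = q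
    cases p <;> cases q <;> simp [bitColor]
  have hmem : ∀ v n, n ∈ colorsAt G c v ↔
      ∃ e : G.edgeSet, v ∈ e.1 ∧ bitColor (χ₁ e) (χ₂ e) = n := by
    intro v n
    constructor
    · rintro ⟨e, ⟨he, hv⟩, rfl⟩
      exact ⟨⟨e, he⟩, hv, (hc ⟨e, he⟩).symm⟩
    · rintro ⟨e, hv, rfl⟩
      exact ⟨e.1, ⟨e.2, hv⟩, hc e⟩
  have hb1 : ∀ p q, bitColor p q = 1 → p = true ∧ q = true := by decide
  have hb2 : ∀ p q, bitColor p q = 2 → p = false ∧ q = true := by decide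
  have hb3 : ∀ p q, bitColor p q = 3 → p = true ∧ q = false := by decide
  have hb4 : ∀ p q, bitColor p q = 4 → p = false ∧ q = false := by decide
  have hbinj : ∀ p q p' q', bitColor p q = bitColor p' q' → p = p' ∧ q = q' := by decide
  refine ⟨c, ⟨hrange, ?_⟩, ?_⟩
  · rintro e₁ he₁ e₂ he₂ hne ⟨v, hv₁, hv₂⟩ heq
    rw [hc ⟨e₁, he₁⟩, hc ⟨e₂, he₂⟩] at heq
    obtain ⟨hp, hq⟩ := hbinj _ _ _ _ heq
    exact hne (congrArg Subtype.val (hproper v ⟨e₁, he₁⟩ ⟨e₂, he₂⟩ hv₁ hv₂ hp hq))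
  · intro v
    apply interval_or
    · rintro _ ⟨e, ⟨he, _⟩, rfl⟩
      exact hrange e he
    · rintro ⟨m1, m3, m2, m4⟩
      obtain ⟨e, he, hce⟩ := (hmem v 1).1 m1
      obtain ⟨e', he', hce'⟩ := (hmem v 3).1 m3
      obtain ⟨p1, q1⟩ := hb1 _ _ hce
      obtain ⟨p2, q2⟩ := hb3 _ _ hce'
      obtain ⟨x, hx, hx'⟩ := hbal v e e' he he' (by rintro rfl; simp [q1] at q2) (p1.trans p2.symm)
      rw [p1] at hx'
      have hxf : χ₁ x = false := by simpa using hx'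
      cases hq : χ₂ x
      · exact m4 ((hmem v 4).2 ⟨x, hx, by rw [hxf, hq]; rfl⟩)
      · exact m2 ((hmem v 2).2 ⟨x, hx, by rw [hxf, hq]; rfl⟩)
    · rintro ⟨m2, m4, m1, m3⟩
      obtain ⟨e, he, hce⟩ := (hmem v 2).1 m2
      obtain ⟨e', he', hce'⟩ := (hmem v 4).1 m4
      obtain ⟨p1, q1⟩ := hb2 _ _ hce
      obtain ⟨p2, q2⟩ := hb4 _ _ hce'
      obtain ⟨x, hx, hx'⟩ := hbal v e e' he he' (by rintro rfl; simp [q1] at q2) (p1.trans p2.symm)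
      rw [p1] at hx'
      have hxf : χ₁ x = true := by simpa using hx'
      cases hq : χ₂ x
      · exact m3 ((hmem v 3).2 ⟨x, hx, by rw [hxf, hq]; rfl⟩)
      · exact m1 ((hmem v 1).2 ⟨x, hx, by rw [hxf, hq]; rfl⟩)

/-- every finite bipartite graph with maximum degree `4` has a cyclic
interval `4`-coloring; consequently it is cyclically interval colorable and the least
`t` for which it has a cyclic interval `t`-coloring equals `4`. -/
theorem stmt_3 {V : Type*} [Fintype V] (G : SimpleGraph V) [DecidableRel G.Adj]
    (hbip : G.Colorable 2) (hΔ : G.maxDegree = 4) :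
    (∃ c : Sym2 V → ℕ, IsCyclicIntervalColoring G 4 c) ∧
    IsLeast {t : ℕ | ∃ c : Sym2 V → ℕ, IsCyclicIntervalColoring G t c} 4 := by
  classical
  have hex := exists_cyclic_four G hbip hΔ.le
  refine ⟨hex, hex, ?_⟩
  rintro t ⟨c, ⟨hr, hp⟩, -⟩
  have hne : Nonempty V := by
    by_contra h
    rw [not_nonempty_iff] at h
    rw [SimpleGraph.maxDegree_of_subsingleton] at hΔ
    omega
  obtain ⟨v, hv⟩ := G.exists_maximal_degree_vertex
  rw [hΔ, ← G.card_incidenceFinset_eq_degree v] at hv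
  rw [hv]
  have : (G.incidenceFinset v).card ≤ (Finset.Icc 1 t).card := by
    apply Finset.card_le_card_of_injOn c
    · intro e he
      simp only [Finset.mem_coe, mem_incidenceFinset] at he
      simpa using hr e he.1
    · intro e he e' he' heq
      simp only [Finset.mem_coe, mem_incidenceFinset] at he he'
      by_contra hee
      exact hp e he.1 e' he'.1 hee ⟨v, he.2, he'.2⟩ heq
  simpa using this
end

section
/- Let G be a finite bipartite graph with maximum degree Δ(G) = 2r−1 for some integer r ≥ 2, such that the degree of every vertex of G lies in the set {1, 2, 2r−2, 2r−1}. Then G has a cyclic interval t-coloring for some t ≤ 2r. -/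
open SimpleGraph

section helpers
open Finset Classical

lemma konig_reg {V E : Type*} [Fintype V] (f g : E → V) :
    ∀ (k : ℕ) (S : Finset E), (∀ v, #{e ∈ S | f e = v} = k) → (∀ v, #{e ∈ S | g e = v} = k) →
    ∃ c : E → ℕ, (∀ e ∈ S, c e < k) ∧
      ∀ e ∈ S, ∀ e' ∈ S, c e = c e' → (f e = f e' ∨ g e = g e') → e = e' := by
  intro k
  induction k with
  | zero =>
    intro S hf hg
    have hS : ∀ e, e ∉ S := by
      intro e he
      have := hf (f e)
      rw [Finset.card_eq_zero] at this
      have h2 : e ∈ ({x ∈ S | f x = f e} : Finset E) := by simp [he]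
      rw [this] at h2
      simp at h2
    exact ⟨fun _ => 0, fun e he => (hS e he).elim, fun e he => (hS e he).elim⟩
  | succ k ih =>
    intro S hf hg
    have hall : ∀ s : Finset V, #s ≤ #(s.biUnion fun v => ({e ∈ S | f e = v} : Finset E).image g) := by
      intro s
      set N := s.biUnion fun v => ({e ∈ S | f e = v} : Finset E).image g with hN
      have h1 : #({e ∈ S | f e ∈ s} : Finset E) = #s * (k+1) := by
        rw [Finset.card_eq_sum_card_fiberwise (f := f) (t := s) (by intro e he; simp at he; exact he.2)]
        rw [← smul_eq_mul, ← Finset.sum_const]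
        apply Finset.sum_congr rfl
        intro v hv
        rw [← hf v, Finset.filter_filter]
        congr 1
        ext e; simp; intro _
        rintro rfl; exact hv
      have h2 : #({e ∈ S | g e ∈ N} : Finset E) = #N * (k+1) := by
        rw [Finset.card_eq_sum_card_fiberwise (f := g) (t := N) (by intro e he; simp at he; exact he.2)]
        rw [← smul_eq_mul, ← Finset.sum_const]
        apply Finset.sum_congr rfl
        intro v hv
        rw [← hg v, Finset.filter_filter]
        congr 1
        ext e; simp; intro _
        rintro rfl; exact hv
      have h3 : #({e ∈ S | f e ∈ s} : Finset E) ≤ #({e ∈ S | g e ∈ N} : Finset E) := by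
        apply Finset.card_le_card
        intro e he
        simp only [Finset.mem_filter] at he ⊢
        refine ⟨he.1, ?_⟩
        rw [hN, Finset.mem_biUnion]
        exact ⟨f e, he.2, Finset.mem_image.2 ⟨e, by simp [he.1], rfl⟩⟩
      rw [h1, h2] at h3
      exact Nat.le_of_mul_le_mul_right h3 (Nat.succ_pos k)
    obtain ⟨h, hinj, hmem⟩ := (Finset.all_card_le_biUnion_card_iff_exists_injective _).1 hall
    have hm : ∀ v, ∃ e, e ∈ S ∧ f e = v ∧ g e = h v := by
      intro v
      have := hmem v
      simp only [Finset.mem_image, Finset.mem_filter] at this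
      obtain ⟨e, ⟨h1, h2⟩, h3⟩ := this
      exact ⟨e, h1, h2, h3⟩
    choose m hmS hmf hmg using hm
    have hsurj : Function.Surjective h := Finite.surjective_of_injective hinj
    set S' := S.filter (fun e => ∀ v, m v ≠ e) with hS'
    have hf' : ∀ v, #{e ∈ S' | f e = v} = k := by
      intro v
      have : ({e ∈ S' | f e = v} : Finset E) = ({e ∈ S | f e = v} : Finset E).erase (m v) := by
        ext e
        simp only [hS', Finset.mem_filter, Finset.mem_erase]
        constructor
        · rintro ⟨⟨h1, h2⟩, h3⟩
          exact ⟨fun h => h2 v h.symm, h1, h3⟩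
        · rintro ⟨h1, h2, h3⟩
          refine ⟨⟨h2, ?_⟩, h3⟩
          rintro w rfl
          rw [hmf] at h3
          exact h1 (by rw [h3])
      rw [this, Finset.card_erase_of_mem (by simp [hmS, hmf]), hf]; rfl
    have hg' : ∀ v, #{e ∈ S' | g e = v} = k := by
      intro v
      obtain ⟨u, rfl⟩ := hsurj v
      have : ({e ∈ S' | g e = h u} : Finset E) = ({e ∈ S | g e = h u} : Finset E).erase (m u) := by
        ext e
        simp only [hS', Finset.mem_filter, Finset.mem_erase]
        constructor
        · rintro ⟨⟨h1, h2⟩, h3⟩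
          exact ⟨fun h => h2 u h.symm, h1, h3⟩
        · rintro ⟨h1, h2, h3⟩
          refine ⟨⟨h2, ?_⟩, h3⟩
          rintro w rfl
          rw [hmg] at h3
          exact h1 (by rw [hinj h3])
      rw [this, Finset.card_erase_of_mem (by simp [hmS, hmg]), hg]; rfl
    obtain ⟨c, hc1, hc2⟩ := ih S' hf' hg'
    refine ⟨fun e => if e ∈ S' then c e else k, ?_, ?_⟩
    · intro e he
      by_cases h : e ∈ S'
      · have := hc1 e h
        simp only [h, if_true]; omega
      · simp [h]
    · intro e he e' he' hcc hfg
      by_cases h1 : e ∈ S' <;> by_cases h2 : e' ∈ S'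
      · simp only [h1, h2, if_true] at hcc
        exact hc2 e h1 e' h2 hcc hfg
      · simp only [h1, h2, if_true, if_false] at hcc
        have := hc1 e h1; omega
      · simp only [h1, h2, if_true, if_false] at hcc
        have := hc1 e' h2; omega
      · simp only [hS', Finset.mem_filter, he, he', true_and, not_forall, not_not] at h1 h2
        obtain ⟨u, rfl⟩ := h1
        obtain ⟨w, rfl⟩ := h2
        rcases hfg with h | h
        · rw [hmf, hmf] at h; rw [h]
        · rw [hmg, hmg] at h; rw [hinj h]

lemma card_fib_sum {A B C : Type*} [Fintype A] [Fintype B] [DecidableEq C]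
    (f : A → C) (g : B → C) (x : C) :
    #{p | Sum.elim f g p = x} = #{y | f y = x} + #{y | g y = x} := by
  simp only [Finset.card_filter, Fintype.sum_sum_type, Sum.elim_inl, Sum.elim_inr]
  rfl

/-- König edge colouring for bipartite multigraphs. -/
lemma konig {E A B : Type*} [Fintype E] [Fintype A] [Fintype B] (a : E → A) (b : E → B) (k : ℕ)
    (ha : ∀ v, #{e | a e = v} ≤ k) (hb : ∀ v, #{e | b e = v} ≤ k) :
    ∃ c : E → ℕ, (∀ e, c e < k) ∧
      ∀ e e', c e = c e' → (a e = a e' ∨ b e = b e') → e = e' := by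
  let dg : A ⊕ B → ℕ := Sum.elim (fun v => #{e | a e = v}) (fun v => #{e | b e = v})
  have hdg : ∀ x, dg x ≤ k := by rintro (x | x); exacts [ha x, hb x]
  let F := (E ⊕ E) ⊕ (Σ x : A ⊕ B, Fin (k - dg x))
  let f : F → A ⊕ B := Sum.elim (Sum.elim (fun e => .inl (a e)) (fun e => .inr (b e))) (fun p => p.1)
  let g : F → A ⊕ B := Sum.elim (Sum.elim (fun e => .inr (b e)) (fun e => .inl (a e))) (fun p => p.1)
  have hl : ∀ x : A ⊕ B, #{p : (Σ x : A ⊕ B, Fin (k - dg x)) | p.1 = x} = k - dg x := by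
    intro x
    rw [← Fintype.card_fin (k - dg x), ← Finset.card_univ,
      ← Finset.card_map (Function.Embedding.sigmaMk (β := fun x => Fin (k - dg x)) x)]
    congr 1
    ext ⟨y, i⟩
    simp only [Finset.mem_filter, Finset.mem_univ, true_and, Finset.mem_map,
      Function.Embedding.sigmaMk_apply]
    constructor
    · rintro rfl; exact ⟨i, rfl⟩
    · rintro ⟨j, hj⟩; exact (congrArg Sigma.fst hj).symm
  have hf : ∀ x, #{p : F | f p = x} = k := by
    intro x
    refine (card_fib_sum _ _ x).trans ?_
    rw [card_fib_sum]
    have h1 := hl x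
    have h2 := hdg x
    rw [h1]
    rcases x with x | x <;> simp [dg] at h2 ⊢ <;> omega
  have hg : ∀ x, #{p : F | g p = x} = k := by
    intro x
    refine (card_fib_sum _ _ x).trans ?_
    rw [card_fib_sum]
    have h1 := hl x
    have h2 := hdg x
    rw [h1]
    rcases x with x | x <;> simp [dg] at h2 ⊢ <;> omega
  obtain ⟨c, h1, h2⟩ := konig_reg f g k Finset.univ (fun x => by convert hf x) (fun x => by convert hg x)
  refine ⟨fun e => c (.inl (.inl e)), fun e => h1 _ (Finset.mem_univ _), ?_⟩
  intro e e' hc hab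
  have := h2 (.inl (.inl e)) (Finset.mem_univ _) (.inl (.inl e')) (Finset.mem_univ _) hc
    (by simpa [f, g] using hab)
  exact Sum.inl_injective (Sum.inl_injective this)

lemma exists_pos {E A : Type*} [Fintype E] (a : E → A) :
    ∃ p : E → ℕ, (∀ e, p e < #{x | a x = a e}) ∧ ∀ e e', a e = a e' → p e = p e' → e = e' := by
  have q : ∀ v : A, ∃ p : E → ℕ, (∀ e, a e = v → p e < #{x | a x = v}) ∧
      ∀ e e', a e = v → a e' = v → p e = p e' → e = e' := by
    intro v
    let T : Finset E := {x | a x = v}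
    have hT : ∀ e, e ∈ T ↔ a e = v := by simp [T]
    refine ⟨fun e => if h : e ∈ T then (T.equivFin ⟨e, h⟩ : ℕ) else 0, ?_, ?_⟩
    · intro e he
      beta_reduce
      rw [dif_pos ((hT e).2 he)]
      exact (T.equivFin _).2
    · intro e e' he he' h
      beta_reduce at h
      rw [dif_pos ((hT e).2 he), dif_pos ((hT e').2 he')] at h
      have := T.equivFin.injective (Fin.ext h)
      simpa using this
  choose p h1 h2 using q
  refine ⟨fun e => p (a e) e, fun e => h1 _ e rfl, ?_⟩
  intro e e' h h'
  refine h2 (a e) e e' rfl h.symm ?_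
  simp only at h'
  rw [h'] 
  rw [h]

lemma balanced {E A B : Type*} [Fintype E] [Fintype A] [Fintype B] (a : E → A) (b : E → B) :
    ∃ c : E → ℕ, (∀ e, c e < 2) ∧
      (∀ v i, #{e | a e = v ∧ c e = i} ≤ (#{e | a e = v} + 1) / 2) ∧
      (∀ v i, #{e | b e = v ∧ c e = i} ≤ (#{e | b e = v} + 1) / 2) := by
  obtain ⟨p, hp1, hp2⟩ := exists_pos a
  obtain ⟨q, hq1, hq2⟩ := exists_pos b
  let n := Fintype.card E + 1
  have key : ∀ {C : Type _} (a : E → C) (p : E → ℕ) (hp2 : ∀ e e', a e = a e' → p e = p e' → e = e')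
      (v : C) (j : ℕ), #{e | a e = v ∧ p e / 2 = j} ≤ 2 := by
    intro C a p hp2 v j
    refine le_trans ?_ (Finset.card_range 2).le
    apply Finset.card_le_card_of_injOn (fun e => p e % 2)
    · intro e _; simp; omega
    · intro e he e' he' h
      simp only [Finset.coe_filter, Finset.mem_univ, true_and, Set.mem_ofPred_eq] at he he' h
      exact hp2 e e' (he.1.trans he'.1.symm) (by omega)
  have key2 : ∀ {C : Type _} (b : E → C) (q : E → ℕ) (hq2 : ∀ e e', b e = b e' → q e = q e' → e = e')
      (v : C) (j : ℕ), #{e | b e = v ∧ q e / 2 = j} ≤ 2 := by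
    intro C a p hp2 v j
    refine le_trans ?_ (Finset.card_range 2).le
    apply Finset.card_le_card_of_injOn (fun e => p e % 2)
    · intro e _; simp; omega
    · intro e he e' he' h
      simp only [Finset.coe_filter, Finset.mem_univ, true_and, Set.mem_ofPred_eq] at he he' h
      exact hp2 e e' (he.1.trans he'.1.symm) (by omega)
  have hpn : ∀ e, p e / 2 < n := by
    intro e
    have := hp1 e
    have h2 := Finset.card_le_univ ({x | a x = a e} : Finset E)
    omega
  have hqn : ∀ e, q e / 2 < n := by
    intro e
    have := hq1 e
    have h2 := Finset.card_le_univ ({x | b x = b e} : Finset E)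
    omega
  obtain ⟨c, hc1, hc2⟩ := konig (fun e => (a e, (⟨p e / 2, hpn e⟩ : Fin n)))
    (fun e => (b e, (⟨q e / 2, hqn e⟩ : Fin n))) 2
    (by
      rintro ⟨v, j⟩
      refine le_trans (Finset.card_le_card ?_) (key a p hp2 v j)
      intro e; simp [Fin.ext_iff])
    (by
      rintro ⟨v, j⟩
      refine le_trans (Finset.card_le_card ?_) (key2 b q hq2 v j)
      intro e; simp [Fin.ext_iff])
  refine ⟨c, hc1, ?_, ?_⟩
  · intro v i
    rw [← Finset.card_range ((#{e | a e = v} + 1) / 2)]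
    apply Finset.card_le_card_of_injOn (fun e => p e / 2)
    · intro e he
      simp only [Finset.coe_filter, Finset.mem_univ, true_and, Set.mem_ofPred_eq] at he
      have := hp1 e
      rw [he.1] at this
      simp only [Finset.coe_range, Set.mem_Iio]
      omega
    · intro e he e' he' h
      simp only [Finset.coe_filter, Finset.mem_univ, true_and, Set.mem_ofPred_eq] at he he' h
      exact hc2 e e' (by omega) (Or.inl (by simp [he.1, he'.1, h]))
  · intro v i
    rw [← Finset.card_range ((#{e | b e = v} + 1) / 2)]
    apply Finset.card_le_card_of_injOn (fun e => q e / 2)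
    · intro e he
      simp only [Finset.coe_filter, Finset.mem_univ, true_and, Set.mem_ofPred_eq] at he
      have := hq1 e
      rw [he.1] at this
      simp only [Finset.coe_range, Set.mem_Iio]
      omega
    · intro e he e' he' h
      simp only [Finset.coe_filter, Finset.mem_univ, true_and, Set.mem_ofPred_eq] at he he' h
      exact hc2 e e' (by omega) (Or.inr (by simp [he.1, he'.1, h]))

/-- Balanced orientation of a bipartite multigraph. -/
lemma orient {E V : Type*} [Fintype E] [Fintype V] (a b : E → V) (X : V → Prop)
    (ha : ∀ e, X (a e)) (hb : ∀ e, ¬ X (b e)) :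
    ∃ l r : E → V, (∀ e, (l e = a e ∧ r e = b e) ∨ (l e = b e ∧ r e = a e)) ∧
      (∀ v, #{e | l e = v} ≤ (#{e | a e = v ∨ b e = v} + 1) / 2) ∧
      (∀ v, #{e | r e = v} ≤ (#{e | a e = v ∨ b e = v} + 1) / 2) ∧
      (∀ v, #{e | l e = v} + #{e | r e = v} = #{e | a e = v ∨ b e = v}) := by
  obtain ⟨c, hc, h1, h2⟩ := balanced a b
  have hA : ∀ v, X v → ∀ e, b e ≠ v := by rintro v hv e rfl; exact hb e hv
  have hB : ∀ v, ¬ X v → ∀ e, a e ≠ v := by rintro v hv e rfl; exact hv (ha e)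
  have h01 : ∀ e, ¬ c e = 0 ↔ c e = 1 := by intro e; have := hc e; omega
  refine ⟨fun e => if c e = 0 then a e else b e, fun e => if c e = 0 then b e else a e,
    ?_, ?_, ?_, ?_⟩
  · intro e; by_cases h : c e = 0 <;> simp [h]
  · intro v
    by_cases hv : X v
    · have := h1 v 0
      refine le_trans (Finset.card_le_card ?_) (le_trans this ?_)
      · intro e; simp; split_ifs with h <;> simp [h, hA v hv e]
      · simp [hA v hv]
    · have := h2 v 1
      refine le_trans (Finset.card_le_card ?_) (le_trans this ?_)
      · intro e; simp; split_ifs with h <;> simp [h, (h01 e).1, hB v hv e]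
      · simp [hB v hv]
  · intro v
    by_cases hv : X v
    · have := h1 v 1
      refine le_trans (Finset.card_le_card ?_) (le_trans this ?_)
      · intro e; simp; split_ifs with h <;> simp [h, (h01 e).1, hA v hv e]
      · simp [hA v hv]
    · have := h2 v 0
      refine le_trans (Finset.card_le_card ?_) (le_trans this ?_)
      · intro e; simp; split_ifs with h <;> simp [h, hB v hv e]
      · simp [hB v hv]
  · intro v
    rw [← Finset.card_union_of_disjoint]
    · congr 1
      ext e
      simp only [Finset.mem_union, Finset.mem_filter, Finset.mem_univ, true_and]
      split_ifs <;> tauto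
    · rw [Finset.disjoint_left]
      intro e
      simp only [Finset.mem_filter, Finset.mem_univ, true_and]
      by_cases hv : X v
      · have := hA v hv e
        split_ifs <;> tauto
      · have := hB v hv e
        split_ifs <;> tauto

lemma classes {E V : Type*} [Fintype E] [Fintype V] (l r : E → V) (k : ℕ)
    (hl : ∀ v, #{e | l e = v} ≤ k) (hr : ∀ v, #{e | r e = v} ≤ k) :
    ∃ c : E → ℕ, (∀ e, c e < k) ∧ (∀ e e', c e = c e' → (l e = l e' ∨ r e = r e') → e = e') ∧
      ∀ v, #{e | l e = v} = #{e | r e = v} → ∀ i,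
        (∃ e, l e = v ∧ c e = i) ↔ (∃ e, r e = v ∧ c e = i) := by
  let lp : V → ℕ := fun v => if #{e | l e = v} = #{e | r e = v} then k - #{e | l e = v} else 0
  let F := E ⊕ (Σ x : V, Fin (lp x))
  let f : F → V := Sum.elim l (fun p => p.1)
  let g : F → V := Sum.elim r (fun p => p.1)
  have hlp : ∀ x : V, #{p : (Σ x : V, Fin (lp x)) | p.1 = x} = lp x := by
    intro x
    rw [← Fintype.card_fin (lp x), ← Finset.card_univ,
      ← Finset.card_map (Function.Embedding.sigmaMk (β := fun x => Fin (lp x)) x)]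
    congr 1
    ext ⟨y, i⟩
    simp only [Finset.mem_filter, Finset.mem_univ, true_and, Finset.mem_map,
      Function.Embedding.sigmaMk_apply]
    constructor
    · rintro rfl; exact ⟨i, rfl⟩
    · rintro ⟨j, hj⟩; exact (congrArg Sigma.fst hj).symm
  have hf : ∀ x, #{p : F | f p = x} = #{e | l e = x} + lp x := by
    intro x
    refine (card_fib_sum _ _ x).trans ?_
    rw [hlp x]
  have hg : ∀ x, #{p : F | g p = x} = #{e | r e = x} + lp x := by
    intro x
    refine (card_fib_sum _ _ x).trans ?_
    rw [hlp x]
  obtain ⟨c, h1, h2⟩ := konig f g k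
    (by intro x; rw [hf]; have := hl x; simp only [lp]; split_ifs <;> omega)
    (by intro x; rw [hg]; have := hr x; simp only [lp]; split_ifs <;> omega)
  refine ⟨fun e => c (.inl e), fun e => h1 _, ?_, ?_⟩
  · intro e e' hc h
    have := h2 (.inl e) (.inl e') hc (by simpa [f, g] using h)
    exact Sum.inl_injective this
  · intro v hv i
    have hfk : #{p : F | f p = v} = k := by
      rw [hf]; have := hl v; simp only [lp]; rw [if_pos hv]; omega
    have hgk : #{p : F | g p = v} = k := by
      rw [hg]; have := hr v; simp only [lp]; rw [if_pos hv]; omega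
    have surj : ∀ (h : F → V), (∀ p p', c p = c p' → h p = h p' → p = p') →
        #{p : F | h p = v} = k → ∀ i < k, ∃ p, h p = v ∧ c p = i := by
      intro h hh hk i hi
      have himg : ({p : F | h p = v} : Finset F).image c = Finset.range k := by
        apply Finset.eq_of_subset_of_card_le
        · intro j hj
          obtain ⟨p, _, rfl⟩ := Finset.mem_image.1 hj
          exact Finset.mem_range.2 (h1 p)
        · rw [Finset.card_image_of_injOn, hk, Finset.card_range]
          intro p hp p' hp' hc
          simp only [Finset.coe_filter, Finset.mem_univ, true_and, Set.mem_ofPred_eq] at hp hp'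
          exact hh p p' hc (hp.trans hp'.symm)
      have : i ∈ ({p : F | h p = v} : Finset F).image c := by rw [himg]; simpa using hi
      obtain ⟨p, hp, hpi⟩ := Finset.mem_image.1 this
      exact ⟨p, by simpa using hp, hpi⟩
    constructor
    · rintro ⟨e, he, hei⟩
      obtain ⟨p, hp, hpi⟩ := surj g (fun p p' hc h => h2 p p' hc (Or.inr h)) hgk i (hei ▸ h1 _)
      rcases p with p | p
      · exact ⟨p, hp, hpi⟩
      · have := h2 (.inl e) (.inr p) (hei.trans hpi.symm) (Or.inl (he.trans hp.symm))
        simp at this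
    · rintro ⟨e, he, hei⟩
      obtain ⟨p, hp, hpi⟩ := surj f (fun p p' hc h => h2 p p' hc (Or.inl h)) hfk i (hei ▸ h1 _)
      rcases p with p | p
      · exact ⟨p, hp, hpi⟩
      · have := h2 (.inl e) (.inr p) (hei.trans hpi.symm) (Or.inr (he.trans hp.symm))
        simp at this

lemma main_multi {E V : Type*} [Fintype E] [Fintype V] (a b : E → V) (X : V → Prop)
    (ha : ∀ e, X (a e)) (hb : ∀ e, ¬ X (b e)) (k : ℕ) (hk : 2 ≤ k)
    (hdeg : ∀ v, #{e | a e = v ∨ b e = v} ∈ ({1, 2, 2 * k - 2, 2 * k - 1} : Set ℕ)) :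
    ∃ c : E → ℕ, (∀ e, c e ∈ Set.Icc 1 (2 * k)) ∧
      (∀ e e', c e = c e' → (a e = a e' ∨ b e = b e') → e = e') ∧
      ∀ v, IsIntervalSet (c '' {e | a e = v ∨ b e = v}) ∨
        IsIntervalSet (Set.Icc 1 (2 * k) \ c '' {e | a e = v ∨ b e = v}) := by
  obtain ⟨l, r, hlr, hl, hr, hs⟩ := orient a b X ha hb
  have hd : ∀ v, #{e | a e = v ∨ b e = v} = 1 ∨ #{e | a e = v ∨ b e = v} = 2 ∨
      #{e | a e = v ∨ b e = v} = 2 * k - 2 ∨ #{e | a e = v ∨ b e = v} = 2 * k - 1 := by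
    intro v; simpa using hdeg v
  obtain ⟨κ, hκ1, hκ2, hκ3⟩ := classes l r k
    (by intro v; have := hl v; have := hd v; omega)
    (by intro v; have := hr v; have := hd v; omega)
  have hcl : ∀ v i, #{e | (a e = v ∨ b e = v) ∧ κ e = i} ≤ 2 := by
    intro v i
    have h1 : #{e | l e = v ∧ κ e = i} ≤ 1 := by
      rw [Finset.card_le_one]
      intro e he e' he'
      simp only [Finset.mem_filter, Finset.mem_univ, true_and] at he he'
      exact hκ2 e e' (by omega) (Or.inl (he.1.trans he'.1.symm))
    have h2 : #{e | r e = v ∧ κ e = i} ≤ 1 := by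
      rw [Finset.card_le_one]
      intro e he e' he'
      simp only [Finset.mem_filter, Finset.mem_univ, true_and] at he he'
      exact hκ2 e e' (by omega) (Or.inr (he.1.trans he'.1.symm))
    have h3 : ({e | (a e = v ∨ b e = v) ∧ κ e = i} : Finset E) ⊆
        ({e | l e = v ∧ κ e = i} : Finset E) ∪ ({e | r e = v ∧ κ e = i} : Finset E) := by
      intro e
      simp only [Finset.mem_union, Finset.mem_filter, Finset.mem_univ, true_and]
      rcases hlr e with ⟨h, h'⟩ | ⟨h, h'⟩ <;> rw [h, h'] <;> tauto
    have := Finset.card_le_card h3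
    have := Finset.card_union_le ({e | l e = v ∧ κ e = i} : Finset E) ({e | r e = v ∧ κ e = i} : Finset E)
    omega
  obtain ⟨δ, hδ1, hδ2⟩ := konig (fun e => (a e, (⟨κ e, hκ1 e⟩ : Fin k)))
    (fun e => (b e, (⟨κ e, hκ1 e⟩ : Fin k))) 2
    (by
      rintro ⟨v, j⟩
      refine le_trans (Finset.card_le_card ?_) (hcl v j)
      intro e; simp [Fin.ext_iff]; tauto)
    (by
      rintro ⟨v, j⟩
      refine le_trans (Finset.card_le_card ?_) (hcl v j)
      intro e; simp [Fin.ext_iff]; tauto)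
  have hδ : ∀ e e', δ e = δ e' → κ e = κ e' → (a e = a e' ∨ b e = b e') → e = e' := by
    intro e e' h1 h2 h3
    refine hδ2 e e' h1 ?_
    simpa [h2] using h3
  let c : E → ℕ := fun e => 2 * κ e + δ e + 1
  have hc1 : ∀ e, c e ∈ Set.Icc 1 (2 * k) := by
    intro e; have := hκ1 e; have := hδ1 e; simp only [c, Set.mem_Icc]; omega
  have hc2 : ∀ e e', c e = c e' → (a e = a e' ∨ b e = b e') → e = e' := by
    intro e e' h h'
    have := hδ1 e; have := hδ1 e'
    simp only [c] at h
    exact hδ e e' (by omega) (by omega) h'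
  have hsh : ∀ v e e', (a e = v ∨ b e = v) → (a e' = v ∨ b e' = v) →
      (a e = a e' ∨ b e = b e') := by
    intro v e e' h h'
    have h1 := ha e; have h2 := ha e'; have h3 := hb e; have h4 := hb e'
    rcases h with h | h <;> rcases h' with h' | h'
    · left; rw [h, h']
    · rw [h] at h1; rw [h'] at h4; exact (h4 h1).elim
    · rw [h] at h3; rw [h'] at h2; exact (h3 h2).elim
    · right; rw [h, h']
  have hinc : ∀ e v, (a e = v ∨ b e = v) ↔ (l e = v ∨ r e = v) := by
    intro e v
    rcases hlr e with ⟨h, h'⟩ | ⟨h, h'⟩ <;> rw [h, h']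
    tauto
  refine ⟨c, hc1, hc2, ?_⟩
  intro v
  set T : Finset ℕ := ({e | a e = v ∨ b e = v} : Finset E).image c with hT
  have hTS : c '' {e | a e = v ∨ b e = v} = (T : Set ℕ) := by
    rw [hT]; ext x; simp
  have hTc : #T = #{e | a e = v ∨ b e = v} := by
    rw [hT, Finset.card_image_of_injOn]
    intro e he e' he' h
    simp only [Finset.coe_filter, Finset.mem_univ, true_and, Set.mem_ofPred_eq] at he he'
    exact hc2 e e' h (hsh v e e' he he')
  have hTsub : T ⊆ Finset.Icc 1 (2 * k) := by
    intro x hx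
    obtain ⟨e, _, rfl⟩ := Finset.mem_image.1 hx
    have := hc1 e
    simpa using this
  have hTcomp : #(Finset.Icc 1 (2 * k) \ T) = 2 * k - #T := by
    rw [Finset.card_sdiff_of_subset hTsub]; simp
  have hcomp : Set.Icc 1 (2 * k) \ c '' {e | a e = v ∨ b e = v} =
      ((Finset.Icc 1 (2 * k) \ T : Finset ℕ) : Set ℕ) := by
    rw [hTS]; simp
  rw [hcomp, hTS]
  have hpair : ∀ i, ((Set.Icc (2 * i + 1) (2 * i + 2) : Set ℕ)) =
      (({2 * i + 1, 2 * i + 2} : Finset ℕ) : Set ℕ) := by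
    intro i; ext x; simp; omega
  have hpc : ∀ i, #({2 * i + 1, 2 * i + 2} : Finset ℕ) = 2 := by
    intro i; rw [Finset.card_pair]; omega
  have h1 := hl v; have h2 := hr v; have h3 := hs v
  rcases hd v with h | h | h | h
  · left
    rw [h] at hTc
    obtain ⟨x, hx⟩ := Finset.card_eq_one.1 hTc
    exact ⟨x, x, by rw [hx]; simp⟩
  · left
    have hev : #{e | l e = v} = #{e | r e = v} := by omega
    have hl1 : 0 < #{e | l e = v} := by omega
    obtain ⟨e, he⟩ := Finset.card_pos.1 hl1
    simp only [Finset.mem_filter, Finset.mem_univ, true_and] at he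
    obtain ⟨e', he', hee⟩ := (hκ3 v hev (κ e)).1 ⟨e, he, rfl⟩
    have hne : e ≠ e' := by
      rintro rfl
      have h5 := ha e; have h6 := hb e
      rcases hlr e with ⟨h, h'⟩ | ⟨h, h'⟩
      · rw [← h, he] at h5; rw [← h', he'] at h6; exact h6 h5
      · rw [← h', he'] at h5; rw [← h, he] at h6; exact h6 h5
    have hi := (hinc e v).2 (Or.inl he)
    have hi' := (hinc e' v).2 (Or.inr he')
    have hdn : δ e ≠ δ e' := fun h => hne (hδ e e' h hee.symm (hsh v e e' hi hi'))
    refine ⟨2 * κ e + 1, 2 * κ e + 2, ?_⟩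
    rw [hpair]
    congr 1
    symm
    apply Finset.eq_of_subset_of_card_le
    · have m1 : c e ∈ T := Finset.mem_image.2 ⟨e, by simpa using hi, rfl⟩
      have m2 : c e' ∈ T := Finset.mem_image.2 ⟨e', by simpa using hi', rfl⟩
      have d1 := hδ1 e; have d2 := hδ1 e'
      simp only [c, hee] at m1 m2
      intro x hx
      simp only [Finset.mem_insert, Finset.mem_singleton] at hx
      have : x = 2 * κ e + δ e + 1 ∨ x = 2 * κ e + δ e' + 1 := by omega
      rcases this with h | h <;> rw [h] <;> assumption
    · rw [hpc, hTc, h]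
  · right
    have hev : #{e | l e = v} = #{e | r e = v} := by omega
    have hlt : #(({e | l e = v} : Finset E).image κ) < #(Finset.range k) := by
      have := Finset.card_image_le (s := ({e | l e = v} : Finset E)) (f := κ)
      rw [Finset.card_range]; omega
    obtain ⟨i, hik, hi⟩ := Finset.exists_mem_notMem_of_card_lt_card hlt
    have hnl : ¬ ∃ e, l e = v ∧ κ e = i := by
      rintro ⟨e, he, hei⟩
      exact hi (Finset.mem_image.2 ⟨e, by simpa using he, hei⟩)
    have hnr : ¬ ∃ e, r e = v ∧ κ e = i := fun h => hnl ((hκ3 v hev i).2 h)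
    have hik' := Finset.mem_range.1 hik
    refine ⟨2 * i + 1, 2 * i + 2, ?_⟩
    rw [hpair]
    congr 1
    symm
    apply Finset.eq_of_subset_of_card_le
    · intro x hx
      simp only [Finset.mem_insert, Finset.mem_singleton] at hx
      rw [Finset.mem_sdiff]
      refine ⟨by rw [Finset.mem_Icc]; omega, ?_⟩
      intro hxT
      obtain ⟨e, he, hex⟩ := Finset.mem_image.1 hxT
      simp only [Finset.mem_filter, Finset.mem_univ, true_and] at he
      have d1 := hδ1 e
      simp only [c] at hex
      have hki : κ e = i := by omega
      rcases (hinc e v).1 he with h | h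
      · exact hnl ⟨e, h, hki⟩
      · exact hnr ⟨e, h, hki⟩
    · rw [hpc, hTcomp, hTc, h]; omega
  · right
    have : #(Finset.Icc 1 (2 * k) \ T) = 1 := by rw [hTcomp, hTc, h]; omega
    obtain ⟨x, hx⟩ := Finset.card_eq_one.1 this
    exact ⟨x, x, by rw [hx]; simp⟩

end helpers

/-- a finite bipartite graph with maximum degree `2r - 1` (`r ≥ 2`) in which
every vertex degree lies in `{1, 2, 2r-2, 2r-1}` has a cyclic interval `t`-coloring for
some `t ≤ 2r`. -/
theorem stmt_4 {V : Type*} [Fintype V] (G : SimpleGraph V) [DecidableRel G.Adj]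
    (hbip : G.Colorable 2) (r : ℕ) (hr : 2 ≤ r) (hΔ : G.maxDegree = 2 * r - 1)
    (hdeg : ∀ v : V, G.degree v ∈ ({1, 2, 2 * r - 2, 2 * r - 1} : Set ℕ)) :
    ∃ t : ℕ, t ≤ 2 * r ∧ ∃ c : Sym2 V → ℕ, IsCyclicIntervalColoring G t c := by
  classical
  obtain ⟨col⟩ := hbip
  have hcol : ∀ {u v}, G.Adj u v → col u ≠ col v := fun h => col.valid h
  have hex : ∀ e : G.edgeSet, ∃ p : V × V, e.1 = s(p.1, p.2) ∧ col p.1 = 0 ∧ ¬ col p.2 = 0 := by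
    rintro ⟨e, he⟩
    induction e using Sym2.ind with
    | _ x y =>
      have h := hcol (G.mem_edgeSet.1 he)
      by_cases hx : col x = 0
      · exact ⟨(x, y), rfl, hx, fun hy => h (hx.trans hy.symm)⟩
      · refine ⟨(y, x), Sym2.eq_swap, ?_, hx⟩
        simp only
        omega
  choose p hp1 hp2 hp3 using hex
  have hmem : ∀ (e : G.edgeSet) v, v ∈ e.1 ↔ ((p e).1 = v ∨ (p e).2 = v) := by
    intro e v; rw [hp1 e, Sym2.mem_iff]; simp [eq_comm]
  have hdg : ∀ v, (Finset.univ.filter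
      (fun e : G.edgeSet => (p e).1 = v ∨ (p e).2 = v)).card = G.degree v := by
    intro v
    rw [← G.card_incidenceFinset_eq_degree v,
      ← Finset.card_map (Function.Embedding.subtype (· ∈ G.edgeSet))]
    congr 1
    ext e
    simp only [Finset.mem_map, Finset.mem_filter, Finset.mem_univ, true_and,
      SimpleGraph.mem_incidenceFinset, Function.Embedding.subtype_apply, ← hmem]
    constructor
    · rintro ⟨x, hx, rfl⟩; exact ⟨x.2, hx⟩
    · rintro ⟨h1, h2⟩; exact ⟨⟨e, h1⟩, h2, rfl⟩
  obtain ⟨c, hc1, hc2, hc3⟩ := main_multi (fun e : G.edgeSet => (p e).1) (fun e => (p e).2)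
    (fun v => col v = 0) hp2 hp3 r hr (by
      intro v
      have := hdeg v
      rw [← hdg v] at this
      convert this)
  refine ⟨2 * r, le_rfl, fun e => if h : e ∈ G.edgeSet then c ⟨e, h⟩ else 0, ⟨?_, ?_⟩, ?_⟩
  · intro e he
    simp only [he, dif_pos]
    exact hc1 _
  · rintro e₁ h₁ e₂ h₂ hne ⟨v, hv₁, hv₂⟩ h
    simp only [h₁, h₂, dif_pos] at h
    have m1 := (hmem ⟨e₁, h₁⟩ v).1 hv₁
    have m2 := (hmem ⟨e₂, h₂⟩ v).1 hv₂
    have q1 := hp2 ⟨e₁, h₁⟩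
    have q2 := hp2 ⟨e₂, h₂⟩
    have q3 := hp3 ⟨e₁, h₁⟩
    have q4 := hp3 ⟨e₂, h₂⟩
    apply hne
    have := hc2 _ _ h (by
      rcases m1 with m1 | m1 <;> rcases m2 with m2 | m2
      · left; rw [m1, m2]
      · rw [m1] at q1; rw [m2] at q4; exact (q4 q1).elim
      · rw [m1] at q3; rw [m2] at q2; exact (q3 q2).elim
      · right; rw [m1, m2])
    exact congrArg Subtype.val this
  · intro v
    have : colorsAt G (fun e => if h : e ∈ G.edgeSet then c ⟨e, h⟩ else 0) v =
        c '' {e | (p e).1 = v ∨ (p e).2 = v} := by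
      unfold colorsAt
      ext x
      simp only [Set.mem_image, Set.mem_ofPred_eq, ← hmem]
      constructor
      · rintro ⟨e, ⟨he, hv⟩, hx⟩
        rw [dif_pos he] at hx
        exact ⟨⟨e, he⟩, hv, hx⟩
      · rintro ⟨⟨e, he⟩, hv, hx⟩
        exact ⟨e, ⟨he, hv⟩, by rw [dif_pos he]; exact hx⟩
    rw [this]
    exact hc3 v
end

section
/- Let G be a finite bipartite graph with maximum degree Δ(G) = 4 having no vertices of degree 3. Then G has a proper edge coloring α with colors 1,2,3,4 such that for every vertex v, S(v,α) is an interval of consecutive integers, and moreover for every vertex v of degree 2, either S(v,α) = {1,2} or S(v,α) = {3,4}. -/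
open SimpleGraph

/-- Maximal key-preserving pairing. -/
theorem exists_pairing_s5 {D K : Type*} [Fintype D] [DecidableEq D] (k : D → K) :
    ∃ τ : Equiv.Perm D, (∀ d, τ (τ d) = d) ∧ (∀ d, k (τ d) = k d) ∧
      ∀ a b, τ a = a → τ b = b → k a = k b → a = b := by
  classical
  let S : Finset (Equiv.Perm D) := Finset.univ.filter
    (fun τ => (∀ d, τ (τ d) = d) ∧ (∀ d, k (τ d) = k d))
  have hS : S.Nonempty := ⟨1, by simp [S]⟩
  obtain ⟨τ, hτ, hmax⟩ := S.exists_max_image (fun τ => τ.support.card) hS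
  simp only [S, Finset.mem_filter, Finset.mem_univ, true_and] at hτ hmax
  refine ⟨τ, hτ.1, hτ.2, ?_⟩
  intro a b ha hb hk
  by_contra hab
  have hdis : (Equiv.swap a b).Disjoint τ := by
    intro d
    by_cases h1 : d = a
    · right; rw [h1, ha]
    by_cases h2 : d = b
    · right; rw [h2, hb]
    left; exact Equiv.swap_apply_of_ne_of_ne h1 h2
  have hcard := hdis.card_support_mul
  have hc2 := Equiv.Perm.card_support_swap hab
  have hcomm : ∀ d, τ (Equiv.swap a b d) = Equiv.swap a b (τ d) := by
    intro d
    have := hdis.commute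
    exact (congrArg (fun p : Equiv.Perm D => p d) this.eq).symm
  have := hmax (Equiv.swap a b * τ) ⟨by
    intro d
    simp [hcomm, hτ.1], by
    intro d
    simp only [Equiv.Perm.mul_apply]
    rw [← hτ.2 d, Equiv.swap_apply_def]
    split_ifs with h1 h2
    · rw [h1, hk]
    · rw [h2, hk]
    · rfl⟩
  omega

/-- The union of two fixed point free involutions is bipartite. -/
theorem exists_bicolor_fpf {D : Type*} (σ τ : Equiv.Perm D)
    (hσ : σ * σ = 1) (hτ : τ * τ = 1)
    (hσf : ∀ d, σ d ≠ d) (hτf : ∀ d, τ d ≠ d) :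
    ∃ f : D → Bool, (∀ d, f (σ d) = !f d) ∧ (∀ d, f (τ d) = !f d) := by
  classical
  let p : Equiv.Perm D := σ * τ
  have hσi : σ⁻¹ = σ := inv_eq_of_mul_eq_one_left hσ
  have hτi : τ⁻¹ = τ := inv_eq_of_mul_eq_one_left hτ
  have hpi : σ * p * σ⁻¹ = p⁻¹ := by
    simp only [p, mul_inv_rev, hσi, hτi]
    rw [← mul_assoc, hσ, one_mul]
  have hpow : ∀ n : ℤ, σ * p ^ n = p ^ (-n) * σ := by
    intro n
    have h : σ * p ^ n * σ⁻¹ = p ^ (-n) := by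
      rw [← conj_zpow, hpi, inv_zpow, zpow_neg]
    rw [← h]; simp
  have hpow' : ∀ (n : ℤ) d, σ ((p ^ n) d) = (p ^ (-n)) (σ d) := fun n d =>
    congrArg (fun q : Equiv.Perm D => q d) (hpow n)
  have hσσ : ∀ d, σ (σ d) = d := fun d => congrArg (fun q : Equiv.Perm D => q d) hσ
  have key : ∀ d, ¬ p.SameCycle d (σ d) := by
    rintro d ⟨n, hn⟩
    rcases Int.even_or_odd' n with ⟨m, rfl | rfl⟩
    · apply hσf ((p ^ m) d)
      rw [hpow', ← hn, ← Equiv.Perm.mul_apply, ← zpow_add]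
      congr 2; ring
    · apply hτf ((p ^ m) d)
      apply σ.injective
      have h1 : σ (τ ((p ^ m) d)) = (p ^ (m + 1)) d := by
        rw [add_comm, zpow_add, zpow_one]; rfl
      rw [h1, hpow', ← hn, ← Equiv.Perm.mul_apply, ← zpow_add]
      congr 2; ring
  let s : Setoid D := Equiv.Perm.SameCycle.setoid p
  have hs : ∀ a b, p.SameCycle a b → p.SameCycle (σ a) (σ b) := by
    rintro a b ⟨n, rfl⟩
    exact ⟨-n, (hpow' n a).symm⟩
  let F : Quotient s → Quotient s := Quotient.map σ hs
  have hF : ∀ d, F (Quotient.mk s d) = Quotient.mk s (σ d) := fun d => rfl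
  let _ : LinearOrder (Quotient s) := linearOrderOfSTO WellOrderingRel
  have hfσ : ∀ d, decide (Quotient.mk s (σ d) < F (Quotient.mk s (σ d))) =
      !decide (Quotient.mk s d < F (Quotient.mk s d)) := by
    intro d
    rw [hF, hF, hσσ]
    have hne : Quotient.mk s d ≠ Quotient.mk s (σ d) := fun h => key d (Quotient.exact h)
    rcases lt_or_gt_of_ne hne with h | h
    · simp [h, h.le]
    · simp [h, h.le]
  refine ⟨fun d => decide (Quotient.mk s d < F (Quotient.mk s d)), hfσ, ?_⟩
  intro d
  have h1 : Quotient.mk s d = Quotient.mk s (σ (τ d)) :=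
    Quotient.sound (⟨1, by simp [p]⟩ : p.SameCycle d (σ (τ d)))
  have h2 := hfσ (τ d)
  simp only at h2 ⊢
  rw [← h1] at h2
  rw [h2, Bool.not_not]

/-- Same, where the second involution may have fixed points. -/
theorem exists_bicolor {D : Type*} (σ τ : D → D)
    (hσ : ∀ d, σ (σ d) = d) (hτ : ∀ d, τ (τ d) = d)
    (hσf : ∀ d, σ d ≠ d) :
    ∃ f : D → Bool, (∀ d, f (σ d) = !f d) ∧ (∀ d, τ d ≠ d → f (τ d) = !f d) := by
  classical
  let s : D × Bool → D × Bool := fun x => (σ x.1, x.2)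
  let t : D × Bool → D × Bool := fun x => if τ x.1 = x.1 then (x.1, !x.2) else (τ x.1, x.2)
  have hs : Function.Involutive s := fun x => by simp [s, hσ]
  have ht : Function.Involutive t := by
    rintro ⟨d, b⟩
    by_cases h : τ d = d
    · simp [t, h]
    · have h' : ¬ d = τ d := fun e => h e.symm
      simp [t, h, hτ, h']
  obtain ⟨f, h1, h2⟩ := exists_bicolor_fpf hs.toPerm ht.toPerm
    (Equiv.ext hs) (Equiv.ext ht)
    (by
      rintro ⟨d, b⟩ h
      exact hσf d (congrArg Prod.fst h))
    (by
      rintro ⟨d, b⟩ h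
      change t (d, b) = (d, b) at h
      by_cases h' : τ d = d
      · simp [t, h'] at h
      · simp [t, h'] at h)
  refine ⟨fun d => f (d, true), fun d => h1 (d, true), fun d hd => ?_⟩
  have := h2 (d, true)
  change f (t (d, true)) = _ at this
  simpa [t, hd] using this

/-- Balanced orientation. -/
theorem exists_balanced {D K : Type*} [Fintype D] [DecidableEq K] (σ : D → D)
    (hσ : ∀ d, σ (σ d) = d) (hσf : ∀ d, σ d ≠ d) (k : D → K) :
    ∃ o : D → Bool, (∀ d, o (σ d) = !o d) ∧ ∀ a c,
      (Finset.univ.filter (fun d => k d = a ∧ o d = c)).card ≤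
      (Finset.univ.filter (fun d => k d = a ∧ o d = !c)).card + 1 := by
  classical
  obtain ⟨τ, h1, h2, h3⟩ := exists_pairing_s5 k
  obtain ⟨o, ho, ho'⟩ := exists_bicolor σ τ hσ h1 hσf
  refine ⟨o, ho, fun a c => ?_⟩
  rw [← Finset.card_filter_add_card_filter_not (fun d => τ d ≠ d)]
  apply add_le_add
  · apply Finset.card_le_card_of_injOn τ _ τ.injective.injOn
    intro d hd
    simp only [Finset.coe_filter, Finset.mem_filter, Finset.mem_univ, true_and,
      Set.mem_ofPred_eq] at hd ⊢
    exact ⟨by rw [h2, hd.1.1], by rw [ho' d hd.2, hd.1.2]⟩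
  · rw [Finset.card_le_one]
    intro x hx y hy
    simp only [Finset.mem_filter, Finset.mem_univ, true_and, not_not] at hx hy
    exact h3 x y hx.2 hy.2 (hx.1.1.trans hy.1.1.symm)

theorem card_split {D K : Type*} [Fintype D] [DecidableEq K] (k : D → K) (o : D → Bool)
    (a : K) (c : Bool) :
    (Finset.univ.filter (fun d => k d = a)).card =
    (Finset.univ.filter (fun d => k d = a ∧ o d = c)).card +
      (Finset.univ.filter (fun d => k d = a ∧ o d = !c)).card := by
  classical
  rw [← Finset.card_filter_add_card_filter_not (fun d => o d = c), Finset.filter_filter,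
    Finset.filter_filter]
  congr 2
  ext d
  cases o d <;> cases c <;> simp

/-- In a fiber of size at most two, a balanced orientation separates the elements. -/
theorem balanced_sep {D K : Type*} [Fintype D] [DecidableEq K] (k : D → K) (o : D → Bool)
    (h : ∀ a c, (Finset.univ.filter (fun d => k d = a ∧ o d = c)).card ≤
      (Finset.univ.filter (fun d => k d = a ∧ o d = !c)).card + 1)
    (d d' : D) (hne : d ≠ d') (hk : k d = k d')
    (hcard : (Finset.univ.filter (fun x => k x = k d)).card ≤ 2) : o d ≠ o d' := by
  classical
  intro ho
  have h1 := h (k d) (o d)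
  have h2 : 1 < (Finset.univ.filter (fun x => k x = k d ∧ o x = o d)).card := by
    rw [Finset.one_lt_card]
    exact ⟨d, by simp, d', by simp [hk, ho], hne⟩
  have h3 := card_split k o (k d) (o d)
  omega

/-- a finite bipartite graph with maximum degree `4` and no vertices of
degree `3` has an interval `4`-coloring in which every vertex of degree `2` sees the
colors `{1,2}` or the colors `{3,4}`. -/
theorem stmt_5 {V : Type*} [Fintype V] (G : SimpleGraph V) [DecidableRel G.Adj]
    (hbip : G.Colorable 2) (hΔ : G.maxDegree = 4) (h3 : ∀ v : V, G.degree v ≠ 3) :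
    ∃ c : Sym2 V → ℕ, IsProperEdgeColoring G 4 c ∧
      (∀ v : V, IsIntervalSet (colorsAt G c v)) ∧
      (∀ v : V, G.degree v = 2 →
        colorsAt G c v = ({1, 2} : Set ℕ) ∨ colorsAt G c v = ({3, 4} : Set ℕ)) := by
  classical
  obtain ⟨B⟩ := hbip
  have hle : ∀ v, G.degree v ≤ 4 := fun v => hΔ ▸ G.degree_le_maxDegree v
  have hfib : ∀ v, (Finset.univ.filter (fun d : G.Dart => d.fst = v)).card = G.degree v :=
    fun v => by
      rw [← G.dart_fst_fiber_card_eq_degree v]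
  have hsy : ∀ d : G.Dart, d.symm.symm = d := fun d => d.symm_symm
  have hsf : ∀ d : G.Dart, d.symm ≠ d := fun d => d.symm_ne
  obtain ⟨o, ho, hob⟩ := exists_balanced (fun d : G.Dart => d.symm) hsy hsf (fun d => d.fst)
  obtain ⟨p, hp, hpb⟩ := exists_balanced (fun d : G.Dart => d.symm) hsy hsf
    (fun d => (d.fst, o d && decide (G.degree d.fst = 4)))
  let x : G.Dart → Bool := fun d => o d ^^ p d
  have hx : ∀ d : G.Dart, x d.symm = x d := by
    intro d
    simp only [x, ho, hp]
    cases o d <;> cases p d <;> rfl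
  obtain ⟨q, hq, hqb⟩ := exists_balanced (fun d : G.Dart => d.symm) hsy hsf
    (fun d => (d.fst, x d))
  let b : V → Bool := fun v => decide (B v = 0)
  have hb : ∀ u v, G.Adj u v → b v = !b u := by
    intro u v h
    have := B.valid h
    simp only [b]
    generalize B u = i at *
    generalize B v = j at *
    revert this
    fin_cases i <;> fin_cases j <;> simp
  let y : G.Dart → Bool := fun d => q d ^^ b d.fst
  have hy : ∀ d : G.Dart, y d.symm = y d := by
    intro d
    have := hb d.fst d.snd d.adj
    have e : b d.symm.fst = !b d.fst := this
    simp only [y, hq, e]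
    cases q d <;> cases b d.fst <;> rfl
  let col : G.Dart → ℕ := fun d => 1 + 2 * (x d).toNat + (y d).toNat
  have hcol : ∀ d d' : G.Dart, d.edge = d'.edge → col d = col d' := by
    intro d d' h
    rcases (dart_edge_eq_iff d d').1 h with rfl | rfl
    · rfl
    · simp only [col, hx, hy]
  -- size of the fibers of `(fst, x)`
  have hx4 : ∀ v, G.degree v = 4 → ∀ c,
      (Finset.univ.filter (fun d : G.Dart => (d.fst, x d) = (v, c))).card = 2 := by
    intro v hv c
    have a0 := hfib v
    have a1 := card_split (fun d : G.Dart => d.fst) o v true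
    have a2 := hob v true
    have a3 := hob v false
    have key : ∀ e, (Finset.univ.filter (fun d : G.Dart =>
        (d.fst, o d && decide (G.degree d.fst = 4)) = (v, e))).card =
        (Finset.univ.filter (fun d : G.Dart => d.fst = v ∧ o d = e)).card := by
      intro e
      congr 1
      ext d
      simp only [Finset.mem_filter, Finset.mem_univ, true_and, Prod.mk.injEq]
      constructor
      · rintro ⟨rfl, h⟩
        simpa [hv] using h
      · rintro ⟨rfl, h⟩
        simpa [hv] using h
    have one : ∀ e f, (Finset.univ.filter (fun d : G.Dart =>
        (d.fst, o d && decide (G.degree d.fst = 4)) = (v, e) ∧ p d = f)).card = 1 := by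
      intro e f
      have b1 := card_split (fun d : G.Dart => (d.fst, o d && decide (G.degree d.fst = 4))) p
        (v, e) f
      have b2 := hpb (v, e) f
      have b3 := hpb (v, e) (!f)
      have b4 := key e
      simp only [Bool.not_not, Bool.not_true, Bool.not_false] at *
      have b5 : (Finset.univ.filter (fun d : G.Dart => d.fst = v ∧ o d = e)).card = 2 := by
        cases e <;> omega
      omega
    have : (Finset.univ.filter (fun d : G.Dart => (d.fst, x d) = (v, c))) =
        (Finset.univ.filter (fun d : G.Dart =>
          (d.fst, o d && decide (G.degree d.fst = 4)) = (v, true) ∧ p d = !c)) ∪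
        (Finset.univ.filter (fun d : G.Dart =>
          (d.fst, o d && decide (G.degree d.fst = 4)) = (v, false) ∧ p d = c)) := by
      ext d
      simp only [Finset.mem_filter, Finset.mem_univ, true_and, Prod.mk.injEq, Finset.mem_union, x]
      by_cases h : d.fst = v
      · subst h
        simp only [hv]
        cases o d <;> cases p d <;> cases c <;> simp
      · simp [h]
    rw [this, Finset.card_union_of_disjoint, one, one]
    rw [Finset.disjoint_left]
    intro d h1 h2
    simp only [Finset.mem_filter, Finset.mem_univ, true_and, Prod.mk.injEq] at h1 h2
    have := h1.1.2.symm.trans h2.1.2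
    simp at this
  have hx2 : ∀ d d' : G.Dart, d ≠ d' → d.fst = d'.fst → G.degree d.fst = 2 → x d = x d' := by
    intro d d' hne hf hv
    have hv' : G.degree d'.fst = 2 := hf ▸ hv
    have h1 := balanced_sep (fun d : G.Dart => d.fst) o hob d d' hne hf
      (by rw [hfib, hv])
    have h2 := balanced_sep (fun d : G.Dart => (d.fst, o d && decide (G.degree d.fst = 4))) p hpb
      d d' hne (by simp [hv, hv', hf])
      (by
        rw [← hv, ← hfib]
        apply Finset.card_le_card
        intro z hz
        simp only [Finset.mem_filter, Finset.mem_univ, true_and, Prod.mk.injEq] at hz ⊢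
        exact hz.1)
    simp only [x]
    revert h1 h2
    cases o d <;> cases p d <;> cases o d' <;> cases p d' <;> simp
  have hinj : ∀ d d' : G.Dart, d ≠ d' → d.fst = d'.fst → col d ≠ col d' := by
    intro d d' hne hf hc
    have hxe : x d = x d' ∧ y d = y d' := by
      simp only [col] at hc
      revert hc
      cases x d <;> cases x d' <;> cases y d <;> cases y d' <;> simp
    have h := balanced_sep (fun d : G.Dart => (d.fst, x d)) q hqb d d' hne
      (by simp [hf, hxe.1])
      (by
        by_cases h4 : G.degree d.fst = 4
        · exact (hx4 _ h4 _).le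
        · have := hle d.fst
          have := h3 d.fst
          refine le_trans ?_ (show G.degree d.fst ≤ 2 by omega)
          rw [← hfib]
          apply Finset.card_le_card
          intro z hz
          simp only [Finset.mem_filter, Finset.mem_univ, true_and, Prod.mk.injEq] at hz ⊢
          exact hz.1)
    apply h
    have := hxe.2
    simp only [y, hf] at this
    simpa using this
  have hmem : ∀ d, col d ∈ Finset.Icc 1 4 := by
    intro d
    simp only [col]
    cases x d <;> cases y d <;> simp
  let c : Sym2 V → ℕ := fun e => if h : ∃ d : G.Dart, d.edge = e then col h.choose else 0
  have hc : ∀ d : G.Dart, c d.edge = col d := by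
    intro d
    have h : ∃ d' : G.Dart, d'.edge = d.edge := ⟨d, rfl⟩
    simp only [c, dif_pos h]
    exact hcol _ _ h.choose_spec
  have hdart : ∀ v e, e ∈ G.edgeSet → v ∈ e → ∃ d : G.Dart, d.fst = v ∧ d.edge = e := by
    intro v e he hv
    obtain ⟨w, rfl⟩ := Sym2.mem_iff_exists.1 hv
    exact ⟨⟨(v, w), he⟩, rfl, rfl⟩
  have hcolors : ∀ v, colorsAt G c v =
      ↑((Finset.univ.filter (fun d : G.Dart => d.fst = v)).image col) := by
    intro v
    ext n
    simp only [colorsAt, Set.mem_image, Finset.coe_image, Finset.coe_filter, Finset.mem_univ,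
      true_and, Set.mem_ofPred_eq]
    constructor
    · rintro ⟨e, he, rfl⟩
      obtain ⟨d, hd, rfl⟩ := hdart v e he.1 he.2
      exact ⟨d, hd, (hc d).symm⟩
    · rintro ⟨d, rfl, rfl⟩
      exact ⟨d.edge, ⟨d.edge_mem, Sym2.mem_mk_left _ _⟩, hc d⟩
  have hcc : ∀ v, ((Finset.univ.filter (fun d : G.Dart => d.fst = v)).image col).card =
      G.degree v := by
    intro v
    rw [Finset.card_image_of_injOn, hfib]
    intro d hd d' hd' h
    simp only [Finset.coe_filter, Finset.mem_univ, true_and, Set.mem_ofPred_eq] at hd hd'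
    by_contra hne
    exact hinj d d' hne (hd.trans hd'.symm) h
  have hdeg2 : ∀ v : V, G.degree v = 2 →
        colorsAt G c v = ({1, 2} : Set ℕ) ∨ colorsAt G c v = ({3, 4} : Set ℕ) := by
    intro v hv
    have h2 := hfib v
    rw [hv, Finset.card_eq_two] at h2
    obtain ⟨d, d', hne, hs⟩ := h2
    have hd : d.fst = v := by
      have : d ∈ Finset.univ.filter (fun d : G.Dart => d.fst = v) := by rw [hs]; simp
      simpa using this
    have hd' : d'.fst = v := by
      have : d' ∈ Finset.univ.filter (fun d : G.Dart => d.fst = v) := by rw [hs]; simp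
      simpa using this
    have e1 := hx2 d d' hne (hd.trans hd'.symm) (hd ▸ hv)
    have e2 := hinj d d' hne (hd.trans hd'.symm)
    rw [hcolors, hs]
    simp only [Finset.image_insert, Finset.image_singleton, Finset.coe_insert,
      Finset.coe_singleton]
    revert e2
    simp only [col, e1]
    cases x d' <;> cases y d <;> cases y d' <;> simp [Set.pair_comm]
  refine ⟨c, ⟨?_, ?_⟩, ?_, hdeg2⟩
  · intro e he
    induction e with | _ u w =>
    obtain ⟨d, -, hd⟩ := hdart u _ he (Sym2.mem_mk_left _ _)
    rw [← hd, hc]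
    simpa using hmem d
  · rintro e₁ h₁ e₂ h₂ hne ⟨v, hv₁, hv₂⟩
    obtain ⟨d, hd, rfl⟩ := hdart v _ h₁ hv₁
    obtain ⟨d', hd', rfl⟩ := hdart v _ h₂ hv₂
    rw [hc, hc]
    exact hinj d d' (fun h => hne (h ▸ rfl)) (hd.trans hd'.symm)
  · intro v
    have hv := hcc v
    have l := hle v
    have l3 := h3 v
    by_cases h4 : G.degree v = 4
    · refine ⟨1, 4, ?_⟩
      rw [hcolors, ← Finset.coe_Icc, Finset.coe_inj]
      apply Finset.eq_of_subset_of_card_le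
      · intro n hn
        obtain ⟨d, -, rfl⟩ := Finset.mem_image.1 hn
        exact hmem d
      · rw [hv, h4]; simp
    by_cases h2 : G.degree v = 2
    · rcases hdeg2 v h2 with h | h
      · refine ⟨1, 2, ?_⟩
        rw [h]; ext n; simp only [Set.mem_insert_iff, Set.mem_singleton_iff, Set.mem_Icc]; omega
      · refine ⟨3, 4, ?_⟩
        rw [h]; ext n; simp only [Set.mem_insert_iff, Set.mem_singleton_iff, Set.mem_Icc]; omega
    by_cases h1 : G.degree v = 1
    · rw [h1, Finset.card_eq_one] at hv
      obtain ⟨n, hn⟩ := hv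
      refine ⟨n, n, ?_⟩
      rw [hcolors, hn]; simp
    · have h0 : G.degree v = 0 := by omega
      rw [h0, Finset.card_eq_zero] at hv
      refine ⟨1, 0, ?_⟩
      rw [hcolors, hv]; simp
end
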